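/- arXiv:1510.06060 — 3 statements merged into one kernel-verified Lean document; each statement's English description precedes it below -/
import Mathlib

section
/- Let Γ be a tree and suppose every fully supported elementary staircase diagram over Γ_n whose distinguished leaf s_n lies in a maximal block is a chain. Then a diagram D lies in both Z⁺(n) (s_n in a maximal block) and Z⁻(n) (s_n in a minimal block) if and only if every block of D contains s_n. -/
/-- A staircase diagram over a graph `G`: a poset of nonempty connected blocks of
vertices satisfying the four axioms of Richmond–Slofstra. -/
structure StaircaseDiagram {V : Type*} (G : SimpleGraph V) where
  blocks : Set (Set V)
  le : Set V → Set V → Prop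
  le_refl : ∀ B ∈ blocks, le B B
  le_trans : ∀ A ∈ blocks, ∀ B ∈ blocks, ∀ C ∈ blocks, le A B → le B C → le A C
  le_antisymm : ∀ A ∈ blocks, ∀ B ∈ blocks, le A B → le B A → A = B
  nonempty : ∀ B ∈ blocks, B.Nonempty
  conn : ∀ B ∈ blocks, (G.induce B).Connected
  /-- (1) if `B` covers `B'` then `B ∪ B'` is connected -/
  cover_conn : ∀ B ∈ blocks, ∀ B' ∈ blocks,
    (le B' B ∧ B' ≠ B ∧ ¬ ∃ C ∈ blocks, (le B' C ∧ B' ≠ C) ∧ (le C B ∧ C ≠ B)) →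
    (G.induce (B ∪ B')).Connected
  /-- (2) each `D_s` is a chain -/
  chain_vertex : ∀ s : V, ∀ B ∈ blocks, ∀ B' ∈ blocks, s ∈ B → s ∈ B' →
    le B B' ∨ le B' B
  /-- (3a) for adjacent `s, t`, `D_s ∪ D_t` is a chain -/
  chain_adj : ∀ s t : V, G.Adj s t → ∀ B ∈ blocks, ∀ B' ∈ blocks,
    (s ∈ B ∨ t ∈ B) → (s ∈ B' ∨ t ∈ B') → le B B' ∨ le B' B
  /-- (3b) `D_s` is a saturated subchain of `D_s ∪ D_t` -/
  saturated_adj : ∀ s t : V, G.Adj s t → ∀ A ∈ blocks, ∀ B ∈ blocks, ∀ C ∈ blocks,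
    s ∈ A → s ∈ B → (s ∈ C ∨ t ∈ C) →
    le A C → A ≠ C → le C B → C ≠ B → s ∈ C
  /-- (4) every block is the minimum of some `D_s` ... -/
  min_exists : ∀ B ∈ blocks, ∃ s ∈ B, ∀ B' ∈ blocks, s ∈ B' → le B B'
  /-- (4) ... and the maximum of some `D_{s'}` -/
  max_exists : ∀ B ∈ blocks, ∃ s ∈ B, ∀ B' ∈ blocks, s ∈ B' → le B' B

namespace StaircaseDiagram

variable {V : Type*} {G : SimpleGraph V} (D : StaircaseDiagram G)

/-- The support of a staircase diagram. -/
def support : Set V := ⋃ B ∈ D.blocks, B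

/-- A staircase diagram is fully supported if every vertex lies in some block. -/
def FullySupported : Prop := D.support = Set.univ

/-- `s` is a critical point if exactly one block contains `s`. -/
def IsCritical (s : V) : Prop :=
  (∃ B ∈ D.blocks, s ∈ B) ∧ {B ∈ D.blocks | s ∈ B}.Subsingleton

/-- `s` is a leaf of the support: it lies in the support and has at most one
neighbour in the support. -/
def IsSupportLeaf (s : V) : Prop :=
  s ∈ D.support ∧ {t | t ∈ D.support ∧ G.Adj s t}.Subsingleton

/-- A staircase diagram is elementary if all its critical points are leaves of
its support. -/
def Elementary : Prop := ∀ s : V, D.IsCritical s → D.IsSupportLeaf s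

/-- A staircase diagram is a chain if any two blocks are comparable. -/
def IsChainDiagram : Prop :=
  ∀ B ∈ D.blocks, ∀ B' ∈ D.blocks, D.le B B' ∨ D.le B' B

end StaircaseDiagram

/-- `s` is contained in a maximal block of `D`. -/
def StaircaseDiagram.InZplus {V : Type*} {G : SimpleGraph V}
    (D : StaircaseDiagram G) (s : V) : Prop :=
  ∃ B ∈ D.blocks, s ∈ B ∧ ∀ B' ∈ D.blocks, D.le B B' → B' = B

/-- `s` is contained in a minimal block of `D`. -/
def StaircaseDiagram.InZminus {V : Type*} {G : SimpleGraph V}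
    (D : StaircaseDiagram G) (s : V) : Prop :=
  ∃ B ∈ D.blocks, s ∈ B ∧ ∀ B' ∈ D.blocks, D.le B' B → B' = B

/-!
The hypothesis on `s` determines the shape of the tree rooted at `s`. Every vertex with children,
together with its children, spans a star, and the stars, ordered by descent of their centres, form
a staircase diagram; suitable leaves may be split off from the star of their parent as singleton
blocks. The star of the root is maximal, so these diagrams are chains, which forces the rooted
tree to be a path, possibly forked into two leaves at its end.

In such a tree, two distinct blocks `m`, `M` through `s` are incomparable under inclusion, so each
misses one of the two leaves and contains all other vertices. Hence every vertex outside `m ∩ M`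
hangs off a vertex of `m ∩ M`. If `m` is minimal and `M` maximal, saturation then pulls every block
back to `s` along parents. Conversely at most two blocks can contain `s`, as they differ only in
the two leaves, so if all blocks do, there are a minimal and a maximal one.
-/

namespace StaircaseDiagram

open SimpleGraph Relation

variable {V : Type*} {G : SimpleGraph V} {s x y z p q u v : V}

section RootedTree

/-- `x` is a child of `p` when `G` is rooted at `s`. Distances in `G` to vertices outside the
component of `s` are `0`, so no such vertex is a child. -/
def IsChild (G : SimpleGraph V) (s x p : V) : Prop :=
  G.Adj x p ∧ G.dist s x = G.dist s p + 1

/-- `x` is a weak descendant of `p` when `G` is rooted at `s`: iterating parents leads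
from `x` to `p` in zero or more steps. -/
def IsDescendant (G : SimpleGraph V) (s x p : V) : Prop :=
  ReflTransGen (IsChild G s) x p

/-- `x` is an internal vertex (it has a child) when `G` is rooted at `s`. -/
def IsInternal (G : SimpleGraph V) (s x : V) : Prop :=
  ∃ y, IsChild G s y x

lemma IsDescendant.eq_or_dist_lt (h : IsDescendant G s x y) :
    x = y ∨ G.dist s y < G.dist s x := by
  induction h with
  | refl => exact Or.inl rfl
  | tail _ hchild ih =>
    have := hchild.2
    right
    rcases ih with rfl | hlt <;> omega

lemma IsDescendant.antisymm (hxy : IsDescendant G s x y) (hyx : IsDescendant G s y x) :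
    x = y := by
  rcases hxy.eq_or_dist_lt with h | h
  · exact h
  · exact (hyx.eq_or_dist_lt.resolve_right h.asymm).symm

lemma IsDescendant.eq_of_not_isInternal (h : IsDescendant G s x y)
    (hy : ¬ IsInternal G s y) : x = y := by
  rcases ReflTransGen.cases_tail h with heq | ⟨z, -, hz⟩
  · exact heq.symm
  · exact absurd ⟨z, hz⟩ hy

lemma isChild_rightUnique (hG : G.IsAcyclic) : Relator.RightUnique (IsChild G s) := by
  have exists_path : ∀ {x p}, IsChild G s x p →
      ∃ w : G.Walk s x, w.IsPath ∧ w.penultimate = p := by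
    intro x p h
    have hsx : G.Reachable s x := .of_dist_ne_zero (by rw [h.2]; omega)
    obtain ⟨w, hw⟩ := (hsx.trans h.1.reachable).exists_walk_length_eq_dist
    refine ⟨w.concat h.1.symm, Walk.isPath_of_length_eq_dist _ ?_, w.penultimate_concat _⟩
    rw [Walk.length_concat, hw, h.2]
  intro x p q hp hq
  obtain ⟨w, hw, rfl⟩ := exists_path hp
  obtain ⟨w', hw', rfl⟩ := exists_path hq
  have : w = w' := congrArg Subtype.val
    ((hG.subsingleton_path s x).elim ⟨w, hw⟩ ⟨w', hw'⟩)
  rw [this]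

lemma IsDescendant.total (hG : G.IsAcyclic) (hy : IsDescendant G s x y)
    (hz : IsDescendant G s x z) : IsDescendant G s y z ∨ IsDescendant G s z y :=
  ReflTransGen.total_of_right_unique (isChild_rightUnique hG) hy hz

lemma IsDescendant.of_isChild_of_ne (hG : G.IsAcyclic) (h : IsDescendant G s x y)
    (hp : IsChild G s x p) (hne : x ≠ y) : IsDescendant G s p y := by
  rcases ReflTransGen.cases_head h with heq | ⟨q, hq, hqy⟩
  · exact absurd heq hne
  · rwa [isChild_rightUnique hG hp hq]

lemma exists_isChild (hG : G.Connected) (hx : x ≠ s) : ∃ p, IsChild G s x p := by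
  obtain ⟨w, hw⟩ := hG.exists_walk_length_eq_dist x s
  cases w with
  | nil => exact absurd rfl hx
  | @cons _ p _ hadj w =>
    refine ⟨p, hadj, ?_⟩
    have hp : G.dist p s ≤ w.length := dist_le w
    have htri : G.dist x s ≤ G.dist x p + G.dist p s := hG.dist_triangle
    rw [dist_eq_one_iff_adj.2 hadj] at htri
    rw [Walk.length_cons] at hw
    rw [dist_comm, dist_comm (u := s) (v := p)]
    omega

lemma isDescendant_root (hG : G.Connected) (x : V) : IsDescendant G s x s := by
  induction hn : G.dist s x generalizing x with
  | zero =>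
    rw [hG.dist_eq_zero_iff.1 hn]
    exact .refl
  | succ n ih =>
    obtain ⟨p, hp⟩ := exists_isChild (s := s) (x := x) hG (by rintro rfl; simp at hn)
    exact .head hp (ih p (by have := hp.2; omega))

lemma isChild_or_isChild (hG : G.IsTree) (h : G.Adj x y) :
    IsChild G s x y ∨ IsChild G s y x :=
  (hG.dist_eq_dist_add_one_of_adj s h).imp (⟨h, ·⟩) (⟨h.symm, ·⟩)

lemma subsingleton_adj_of_not_isInternal (hG : G.IsTree) (hx : ¬ IsInternal G s x) :
    {y | G.Adj x y}.Subsingleton := by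
  have parent : ∀ {y}, G.Adj x y → IsChild G s x y := fun {y} h =>
    (isChild_or_isChild hG h).resolve_right fun hy => hx ⟨y, hy⟩
  exact fun y hy z hz => isChild_rightUnique hG.isAcyclic (parent hy) (parent hz)

lemma mem_of_isDescendant (hG : G.IsTree) {B : Set V} (hB : (G.induce B).Preconnected)
    (hs : s ∈ B) (hx : x ∈ B) (h : IsDescendant G s x y) : y ∈ B := by
  have hreach := (reachable_iff_reflTransGen _ _).1 (hB ⟨s, hs⟩ ⟨x, hx⟩)
  suffices ∀ b : B, ReflTransGen (G.induce B).Adj ⟨s, hs⟩ b →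
      ∀ y, IsDescendant G s b y → y ∈ B from this _ hreach y h
  intro b hb
  induction hb with
  | refl =>
    intro y hy
    exact hy.antisymm (isDescendant_root hG.connected y) ▸ hs
  | @tail b c _ hbc ih =>
    intro y hy
    have hadj : G.Adj b.1 c.1 := hbc
    rcases isChild_or_isChild (s := s) hG hadj with hchild | hchild
    · exact ih y (.head hchild hy)
    · by_cases hcy : c.1 = y
      · exact hcy ▸ c.2
      · exact ih y (hy.of_isChild_of_ne hG.isAcyclic hchild hcy)

end RootedTree

section StarDiagram

variable {E : Set V}

/-- A set of leaves of the tree rooted at `s` that can be split off from the stars of their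
parents without emptying any star: each of them has a sibling outside the set. -/
def IsDetachable (G : SimpleGraph V) (s : V) (E : Set V) : Prop :=
  ∀ x ∈ E, ¬ IsInternal G s x ∧ ∀ p, IsChild G s x p → ∃ z ∉ E, IsChild G s z p

/-- The star at `x` in the tree rooted at `s`: `x` and its children outside `E`. -/
def star (G : SimpleGraph V) (s : V) (E : Set V) (x : V) : Set V :=
  insert x {v | IsChild G s v x ∧ v ∉ E}

/-- The vertices whose stars are the blocks of `starDiagram`. -/
def starCenters (G : SimpleGraph V) (s : V) (E : Set V) : Set V :=
  {x | IsInternal G s x} ∪ E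

/-- The order of `starDiagram`: stars are ordered like their centres, the root being on top. -/
def starLE (G : SimpleGraph V) (s : V) (E : Set V) : Set V → Set V → Prop :=
  Relation.Map (IsDescendant G s) (star G s E) (star G s E)

lemma IsDetachable.exists_isChild_notMem (hE : IsDetachable G s E) (hp : IsInternal G s p) :
    ∃ z ∉ E, IsChild G s z p := by
  obtain ⟨x, hx⟩ := hp
  by_cases hxE : x ∈ E
  · exact (hE x hxE).2 p hx
  · exact ⟨x, hxE, hx⟩

lemma center_mem_star : x ∈ star G s E x := Set.mem_insert x _

lemma isDescendant_of_mem_star (h : v ∈ star G s E x) : IsDescendant G s v x := by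
  rcases h with rfl | h
  · exact .refl
  · exact .single h.1

lemma dist_le_of_mem_star (h : v ∈ star G s E x) : G.dist s v ≤ G.dist s x + 1 := by
  rcases h with rfl | h
  · omega
  · exact h.1.2.le

lemma star_injective : Function.Injective (star G s E) := by
  intro x y h
  have hxy : x ∈ star G s E y := h ▸ center_mem_star
  have hyx : y ∈ star G s E x := h ▸ center_mem_star
  exact (isDescendant_of_mem_star hxy).antisymm (isDescendant_of_mem_star hyx)

lemma starLE_star_iff :
    starLE G s E (star G s E x) (star G s E y) ↔ IsDescendant G s x y :=
  Relation.map_apply_apply star_injective star_injective _ x y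

lemma connected_star (x : V) : (G.induce (star G s E x)).Connected := by
  refine (connected_iff_exists_forall_reachable _).2 ⟨⟨x, center_mem_star⟩, ?_⟩
  rintro ⟨v, rfl | hv⟩
  · exact .refl _
  · exact Adj.reachable (G := G.induce (star G s E x)) hv.1.1.symm

lemma star_cover_connected
    (hle : starLE G s E (star G s E x) (star G s E y)) (hne : star G s E x ≠ star G s E y)
    (hcover : ¬ ∃ C ∈ star G s E '' starCenters G s E,
      (starLE G s E (star G s E x) C ∧ star G s E x ≠ C) ∧
        (starLE G s E C (star G s E y) ∧ C ≠ star G s E y)) :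
    (G.induce (star G s E y ∪ star G s E x)).Connected := by
  rcases ReflTransGen.cases_head (starLE_star_iff.1 hle) with rfl | ⟨p, hxp, hpy⟩
  · exact absurd rfl hne
  by_cases hp : p = y
  · subst hp
    exact connected_induce_union (connected_star _).preconnected (connected_star _).preconnected
      center_mem_star center_mem_star hxp.1.symm
  · exact absurd ⟨star G s E p, ⟨p, Or.inl ⟨x, hxp⟩, rfl⟩,
      ⟨starLE_star_iff.2 (.single hxp), star_injective.ne hxp.1.ne⟩,
      starLE_star_iff.2 hpy, star_injective.ne hp⟩ hcover

lemma star_total (hG : G.IsAcyclic)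
    (hx : v ∈ star G s E x) (hy : v ∈ star G s E y) :
    IsDescendant G s x y ∨ IsDescendant G s y x :=
  (isDescendant_of_mem_star hx).total hG (isDescendant_of_mem_star hy)

lemma star_total_of_adj (hG : G.IsTree) (huv : G.Adj u v)
    (hx : u ∈ star G s E x ∨ v ∈ star G s E x) (hy : u ∈ star G s E y ∨ v ∈ star G s E y) :
    IsDescendant G s x y ∨ IsDescendant G s y x := by
  wlog h : IsChild G s u v generalizing u v
  · exact this huv.symm hx.symm hy.symm ((isChild_or_isChild hG huv).resolve_left h)
  have descends : ∀ {z}, u ∈ star G s E z ∨ v ∈ star G s E z → IsDescendant G s u z :=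
    fun hz => hz.elim isDescendant_of_mem_star fun hv => .head h (isDescendant_of_mem_star hv)
  exact (descends hx).total hG.isAcyclic (descends hy)

lemma star_not_between (hx : v ∈ star G s E x) (hy : v ∈ star G s E y)
    (hxz : IsDescendant G s x z) (hne : x ≠ z) (hzy : IsDescendant G s z y) : z = y := by
  refine hzy.eq_or_dist_lt.resolve_right fun hlt => ?_
  have hzx := hxz.eq_or_dist_lt.resolve_left hne
  have hvy := dist_le_of_mem_star hy
  rcases (isDescendant_of_mem_star hx).eq_or_dist_lt with rfl | hxv <;> omega

lemma exists_mem_star_isDescendant (hG : G.IsAcyclic) (hE : IsDetachable G s E)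
    (hx : x ∈ starCenters G s E) :
    ∃ v ∈ star G s E x, ∀ y, v ∈ star G s E y → IsDescendant G s y x := by
  rcases hx with hx | hx
  · obtain ⟨z, hzE, hz⟩ := hE.exists_isChild_notMem hx
    refine ⟨z, Or.inr ⟨hz, hzE⟩, ?_⟩
    rintro y (rfl | hy)
    · exact .single hz
    · rw [isChild_rightUnique hG hy.1 hz]
      exact .refl
  · refine ⟨x, center_mem_star, ?_⟩
    rintro y (rfl | hy)
    · exact .refl
    · exact absurd hx hy.2

/-- The staircase diagram formed by the stars of the internal vertices of a rooted tree and the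
singletons of a detachable set of leaves. -/
def starDiagram (hG : G.IsTree) (hE : IsDetachable G s E) : StaircaseDiagram G where
  blocks := star G s E '' starCenters G s E
  le := starLE G s E
  le_refl := by
    rintro _ ⟨x, -, rfl⟩
    exact starLE_star_iff.2 .refl
  le_trans := by
    rintro _ ⟨x, -, rfl⟩ _ ⟨y, -, rfl⟩ _ ⟨z, -, rfl⟩ hxy hyz
    exact starLE_star_iff.2 ((starLE_star_iff.1 hxy).trans (starLE_star_iff.1 hyz))
  le_antisymm := by
    rintro _ ⟨x, -, rfl⟩ _ ⟨y, -, rfl⟩ hxy hyx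
    rw [(starLE_star_iff.1 hxy).antisymm (starLE_star_iff.1 hyx)]
  nonempty := by
    rintro _ ⟨x, -, rfl⟩
    exact ⟨x, center_mem_star⟩
  conn := by
    rintro _ ⟨x, -, rfl⟩
    exact connected_star x
  cover_conn := by
    rintro _ ⟨y, -, rfl⟩ _ ⟨x, -, rfl⟩ ⟨hle, hne, hcover⟩
    exact star_cover_connected hle hne hcover
  chain_vertex := by
    rintro v _ ⟨x, -, rfl⟩ _ ⟨y, -, rfl⟩ hx hy
    simpa only [starLE_star_iff] using star_total hG.isAcyclic hx hy
  chain_adj := by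
    rintro u v huv _ ⟨x, -, rfl⟩ _ ⟨y, -, rfl⟩ hx hy
    simpa only [starLE_star_iff] using star_total_of_adj hG huv hx hy
  saturated_adj := by
    rintro v - - _ ⟨x, -, rfl⟩ _ ⟨y, -, rfl⟩ _ ⟨z, -, rfl⟩ hx hy - hxz hne hzy hne'
    exact absurd (congrArg _ (star_not_between hx hy (starLE_star_iff.1 hxz)
      (ne_of_apply_ne _ hne) (starLE_star_iff.1 hzy))) hne'
  min_exists := by
    rintro _ ⟨x, -, rfl⟩
    refine ⟨x, center_mem_star, ?_⟩
    rintro _ ⟨y, -, rfl⟩ hy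
    exact starLE_star_iff.2 (isDescendant_of_mem_star hy)
  max_exists := by
    rintro _ ⟨x, hx, rfl⟩
    obtain ⟨v, hv, hmax⟩ := exists_mem_star_isDescendant hG.isAcyclic hE hx
    refine ⟨v, hv, ?_⟩
    rintro _ ⟨y, -, rfl⟩ hy
    exact starLE_star_iff.2 (hmax y hy)

lemma root_mem_starCenters (hG : G.Connected) (hx : x ∈ starCenters G s E) :
    s ∈ starCenters G s E := by
  by_cases hs : IsInternal G s s
  · exact Or.inl hs
  · exact (isDescendant_root hG x).eq_of_not_isInternal hs ▸ hx

lemma starDiagram_fullySupported (hG : G.IsTree) (hE : IsDetachable G s E)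
    (hs : s ∈ starCenters G s E) : (starDiagram hG hE).FullySupported := by
  refine Set.eq_univ_of_forall fun v => Set.mem_iUnion₂.2 ?_
  by_cases hv : v ∈ starCenters G s E
  · exact ⟨_, ⟨v, hv, rfl⟩, center_mem_star⟩
  · obtain ⟨p, hp⟩ := exists_isChild (s := s) (x := v) hG.connected
      fun h => hv (h ▸ hs)
    exact ⟨_, ⟨p, Or.inl ⟨v, hp⟩, rfl⟩, Or.inr ⟨hp, fun h => hv (Or.inr h)⟩⟩

lemma starDiagram_elementary (hG : G.IsTree) (hleaf : {t | G.Adj s t}.Subsingleton)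
    (hE : IsDetachable G s E) (hs : s ∈ starCenters G s E) :
    (starDiagram hG hE).Elementary := by
  intro v hv
  suffices {t | G.Adj v t}.Subsingleton from
    ⟨starDiagram_fullySupported hG hE hs ▸ Set.mem_univ v, this.anti fun _ ht => ht.2⟩
  by_cases hvs : v = s
  · exact hvs ▸ hleaf
  refine subsingleton_adj_of_not_isInternal (s := s) hG fun hint => ?_
  obtain ⟨p, hp⟩ := exists_isChild hG.connected hvs
  have hstar : star G s E v = star G s E p :=
    hv.2 ⟨⟨v, Or.inl hint, rfl⟩, center_mem_star⟩
      ⟨⟨p, Or.inl ⟨v, hp⟩, rfl⟩, Or.inr ⟨hp, fun h => (hE v h).1 hint⟩⟩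
  exact hp.1.ne (star_injective hstar)

lemma starDiagram_inZplus (hG : G.IsTree) (hE : IsDetachable G s E)
    (hs : s ∈ starCenters G s E) : (starDiagram hG hE).InZplus s := by
  refine ⟨_, ⟨s, hs, rfl⟩, center_mem_star, ?_⟩
  rintro _ ⟨x, -, rfl⟩ hsx
  rw [(starLE_star_iff.1 hsx).antisymm (isDescendant_root hG.connected x)]

end StarDiagram

section TreeShape

/-- Every fully supported elementary diagram over `G` with `s` in a maximal block is a chain,
that is, every member of `Z⁺` is a chain. -/
def ZplusChains (G : SimpleGraph V) (s : V) : Prop :=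
  ∀ D : StaircaseDiagram G, D.FullySupported → D.Elementary → D.InZplus s → D.IsChainDiagram

/-- The tree `G` rooted at `s` is a path starting at `s`, possibly infinite, which may fork into
two leaves at its far end; the finite ones are the Dynkin diagrams of types `A` and `D`. -/
structure IsForkedPath (G : SimpleGraph V) (s : V) : Prop where
  comparable : ∀ {p}, IsInternal G s p → ∀ v, IsDescendant G s v p ∨ IsDescendant G s p v
  eq_or_eq : ∀ {x y z}, ¬ IsInternal G s x → ¬ IsInternal G s y → ¬ IsInternal G s z →
    x ≠ y → z = x ∨ z = y

lemma ZplusChains.comparable_of_mem_starCenters (hchain : ZplusChains G s) (hG : G.IsTree)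
    (hleaf : {t | G.Adj s t}.Subsingleton) {E : Set V} (hE : IsDetachable G s E)
    (hx : x ∈ starCenters G s E) (hy : y ∈ starCenters G s E) :
    IsDescendant G s x y ∨ IsDescendant G s y x := by
  have hs := root_mem_starCenters hG.connected hx
  have htotal := hchain (starDiagram hG hE) (starDiagram_fullySupported hG hE hs)
    (starDiagram_elementary hG hleaf hE hs) (starDiagram_inZplus hG hE hs)
  exact (htotal _ ⟨x, hx, rfl⟩ _ ⟨y, hy, rfl⟩).imp starLE_star_iff.1 starLE_star_iff.1

lemma ZplusChains.comparable_of_isInternal (hchain : ZplusChains G s) (hG : G.IsTree)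
    (hleaf : {t | G.Adj s t}.Subsingleton) (hp : IsInternal G s p) (v : V) :
    IsDescendant G s v p ∨ IsDescendant G s p v := by
  have internal : ∀ {q}, IsInternal G s q → IsDescendant G s q p ∨ IsDescendant G s p q :=
    fun hq => hchain.comparable_of_mem_starCenters hG hleaf (E := ∅) (by simp [IsDetachable])
      (Or.inl hq) (Or.inl hp)
  by_cases hv : IsInternal G s v
  · exact internal hv
  by_cases hvs : v = s
  · exact Or.inr (hvs ▸ isDescendant_root hG.connected p)
  obtain ⟨q, hvq⟩ := exists_isChild hG.connected hvs
  rcases internal ⟨v, hvq⟩ with hqp | hpq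
  · exact Or.inl (.head hvq hqp)
  rcases ReflTransGen.cases_tail hpq with rfl | ⟨c, hpc, hcq⟩
  · exact Or.inl (.single hvq)
  -- `v` has the sibling `c` on the way from `p` to `q`, so it can be split off.
  by_cases hcv : c = v
  · exact Or.inr (hcv ▸ hpc)
  have hE : IsDetachable G s {v} := by
    rintro _ rfl
    refine ⟨hv, fun r hvr => ⟨c, hcv, ?_⟩⟩
    rwa [isChild_rightUnique hG.isAcyclic hvr hvq]
  exact hchain.comparable_of_mem_starCenters hG hleaf hE (Or.inr rfl) (Or.inl hp)

lemma ZplusChains.eq_parent_of_not_isInternal (hchain : ZplusChains G s) (hG : G.IsTree)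
    (hleaf : {t | G.Adj s t}.Subsingleton) (hx : ¬ IsInternal G s x)
    (hy : ¬ IsInternal G s y) (hp : IsChild G s x p) (hq : IsChild G s y q) : p = q := by
  have descends : ∀ {x y p q}, ¬ IsInternal G s x → IsChild G s x p → IsChild G s y q →
      IsDescendant G s p q := by
    intro x y p q hx hp hq
    have hne : x ≠ q := by
      rintro rfl
      exact hx ⟨y, hq⟩
    rcases hchain.comparable_of_isInternal hG hleaf ⟨y, hq⟩ x with h | h
    · exact h.of_isChild_of_ne hG.isAcyclic hp hne
    · exact absurd (h.eq_of_not_isInternal hx).symm hne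
  exact (descends hx hp hq).antisymm (descends hy hq hp)

lemma ZplusChains.eq_or_eq_of_not_isInternal (hchain : ZplusChains G s) (hG : G.IsTree)
    (hleaf : {t | G.Adj s t}.Subsingleton) (hx : ¬ IsInternal G s x)
    (hy : ¬ IsInternal G s y) (hz : ¬ IsInternal G s z) (hxy : x ≠ y) : z = x ∨ z = y := by
  by_contra! hne
  have hzs : z ≠ s := by
    rintro rfl
    exact hne.1 ((isDescendant_root hG.connected x).eq_of_not_isInternal hz).symm
  obtain ⟨p, hzp⟩ := exists_isChild hG.connected hzs
  have hE : IsDetachable G s {x, y} := by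
    have sibling : ∀ {u q}, ¬ IsInternal G s u → IsChild G s u q → IsChild G s z q :=
      fun hu hq => hchain.eq_parent_of_not_isInternal hG hleaf hz hu hzp hq ▸ hzp
    have hzE : z ∉ ({x, y} : Set V) := by simpa using hne
    rintro _ (rfl | rfl)
    · exact ⟨hx, fun q hq => ⟨z, hzE, sibling hx hq⟩⟩
    · exact ⟨hy, fun q hq => ⟨z, hzE, sibling hy hq⟩⟩
  rcases hchain.comparable_of_mem_starCenters hG hleaf hE (x := x) (y := y)
    (Or.inr (Or.inl rfl)) (Or.inr (Or.inr rfl)) with h | h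
  · exact hxy (h.eq_of_not_isInternal hy)
  · exact hxy (h.eq_of_not_isInternal hx).symm

theorem ZplusChains.isForkedPath (hchain : ZplusChains G s) (hG : G.IsTree)
    (hleaf : {t | G.Adj s t}.Subsingleton) : IsForkedPath G s where
  comparable := hchain.comparable_of_isInternal hG hleaf
  eq_or_eq := hchain.eq_or_eq_of_not_isInternal hG hleaf

lemma IsForkedPath.mem_of_isInternal (hF : IsForkedPath G s) (hG : G.IsTree) {B B' : Set V}
    (hB : (G.induce B).Preconnected) (hB' : (G.induce B').Preconnected) (hs : s ∈ B)
    (hs' : s ∈ B') (hBB' : ¬ B ⊆ B') (hB'B : ¬ B' ⊆ B) (hp : IsInternal G s p) : p ∈ B := by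
  obtain ⟨a, ha, ha'⟩ := Set.not_subset.1 hBB'
  obtain ⟨b, hb', hb⟩ := Set.not_subset.1 hB'B
  have hint : ¬ IsInternal G s a := fun h => by
    rcases hF.comparable h b with hba | hab
    · exact ha' (mem_of_isDescendant hG hB' hs' hb' hba)
    · exact hb (mem_of_isDescendant hG hB hs ha hab)
  rcases hF.comparable hp a with hap | hpa
  · exact mem_of_isDescendant hG hB hs ha hap
  · exact hpa.eq_of_not_isInternal hint ▸ ha

end TreeShape

section Blocks

variable (D : StaircaseDiagram G) {A B C m M : Set V}

lemma eq_of_subset (hA : A ∈ D.blocks) (hB : B ∈ D.blocks) (h : A ⊆ B) : A = B := by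
  obtain ⟨u, hu, hmin⟩ := D.min_exists A hA
  obtain ⟨v, hv, hmax⟩ := D.max_exists A hA
  exact D.le_antisymm A hA B hB (hmin B hB (h hu)) (hmax B hB (h hv))

variable {D}

lemma mem_of_isInternal_of_ne (hG : G.IsTree) (hF : IsForkedPath G s) (hA : A ∈ D.blocks)
    (hB : B ∈ D.blocks) (hsA : s ∈ A) (hsB : s ∈ B) (hne : A ≠ B) (hp : IsInternal G s p) :
    p ∈ A :=
  hF.mem_of_isInternal hG (D.conn A hA).preconnected (D.conn B hB).preconnected hsA hsB
    (fun h => hne (D.eq_of_subset hA hB h)) (fun h => hne (D.eq_of_subset hB hA h).symm) hp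

lemma FullySupported.exists_mem_block (hfull : D.FullySupported) (v : V) :
    ∃ B ∈ D.blocks, v ∈ B := by
  simpa [support] using (hfull.symm ▸ Set.mem_univ v : v ∈ D.support)

lemma FullySupported.eq_of_minimal_of_maximal (hfull : D.FullySupported) (hG : G.Preconnected)
    (hB : B ∈ D.blocks) (hmin : ∀ C ∈ D.blocks, D.le C B → C = B)
    (hmax : ∀ C ∈ D.blocks, D.le B C → C = B) (hC : C ∈ D.blocks) : C = B := by
  refine D.eq_of_subset hC hB fun v _ => ?_
  by_contra hv
  obtain ⟨u, hu⟩ := D.nonempty B hB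
  obtain ⟨w⟩ := hG u v
  obtain ⟨d, -, hfst, hsnd⟩ := w.exists_boundary_dart B hu hv
  obtain ⟨A, hA, hdA⟩ := hfull.exists_mem_block d.snd
  have hAB : A = B := by
    rcases D.chain_adj _ _ d.adj A hA B hB (Or.inr hdA) (Or.inl hfst) with h | h
    · exact hmin A hA h
    · exact hmax A hA h
  exact hsnd (hAB ▸ hdA)

lemma mem_of_adj_of_mem_minimal_of_mem_maximal
    (hm : m ∈ D.blocks) (hmin : ∀ C ∈ D.blocks, D.le C m → C = m)
    (hM : M ∈ D.blocks) (hmax : ∀ C ∈ D.blocks, D.le M C → C = M)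
    (huv : G.Adj u v) (hum : u ∈ m) (huM : u ∈ M) (hC : C ∈ D.blocks) (hv : v ∈ C) :
    u ∈ C := by
  by_cases hmC : m = C
  · exact hmC ▸ hum
  by_cases hCM : C = M
  · exact hCM ▸ huM
  have hle_m : D.le m C := (D.chain_adj u v huv m hm C hC (Or.inl hum) (Or.inr hv)).resolve_right
    fun h => hmC (hmin C hC h).symm
  have hle_M : D.le C M := (D.chain_adj u v huv C hC M hM (Or.inr hv) (Or.inl huM)).resolve_right
    fun h => hCM (hmax C hC h)
  exact D.saturated_adj u v huv m hm M hM C hC hum huM (Or.inr hv) hle_m hmC hle_M hCM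

lemma root_mem_of_minimal_of_maximal (hG : G.IsTree) (hF : IsForkedPath G s)
    (hm : m ∈ D.blocks) (hmin : ∀ C ∈ D.blocks, D.le C m → C = m)
    (hM : M ∈ D.blocks) (hmax : ∀ C ∈ D.blocks, D.le M C → C = M)
    (hsm : s ∈ m) (hsM : s ∈ M) (hne : m ≠ M) (hC : C ∈ D.blocks) : s ∈ C := by
  have parent_mem : ∀ {v p}, IsChild G s v p → v ∈ C → p ∈ C := fun {v _} hvp =>
    mem_of_adj_of_mem_minimal_of_mem_maximal hm hmin hM hmax hvp.1.symm
      (mem_of_isInternal_of_ne hG hF hm hM hsm hsM hne ⟨v, hvp⟩)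
      (mem_of_isInternal_of_ne hG hF hM hm hsM hsm hne.symm ⟨v, hvp⟩) hC
  obtain ⟨v, hv⟩ := D.nonempty C hC
  induction isDescendant_root (s := s) hG.connected v using ReflTransGen.head_induction_on with
  | refl => exact hv
  | head hchild _ ih => exact ih (parent_mem hchild hv)

lemma eq_or_eq_of_root_mem (hG : G.IsTree) (hF : IsForkedPath G s)
    (hA : A ∈ D.blocks) (hB : B ∈ D.blocks) (hC : C ∈ D.blocks)
    (hsA : s ∈ A) (hsB : s ∈ B) (hsC : s ∈ C) (hne : A ≠ B) : C = A ∨ C = B := by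
  by_contra! hCne
  obtain ⟨a, haA, haB⟩ := Set.not_subset.1 fun h => hne (D.eq_of_subset hA hB h)
  obtain ⟨b, hbB, hbA⟩ := Set.not_subset.1 fun h => hne (D.eq_of_subset hB hA h).symm
  have internal_A : ∀ v, IsInternal G s v → v ∈ A := fun _ =>
    mem_of_isInternal_of_ne hG hF hA hB hsA hsB hne
  have internal_B : ∀ v, IsInternal G s v → v ∈ B := fun _ =>
    mem_of_isInternal_of_ne hG hF hB hA hsB hsA hne.symm
  have internal_C : ∀ v, IsInternal G s v → v ∈ C := fun _ =>
    mem_of_isInternal_of_ne hG hF hC hA hsC hsA hCne.1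
  have leaf : ∀ v, ¬ IsInternal G s v → v = a ∨ v = b := fun v hv =>
    hF.eq_or_eq (mt (internal_B a) haB) (mt (internal_A b) hbA) hv fun h => haB (h ▸ hbB)
  by_cases haC : a ∈ C
  · refine hCne.1 (D.eq_of_subset hA hC fun v hvA => ?_).symm
    by_contra hvC
    rcases leaf v (mt (internal_C v) hvC) with rfl | rfl
    exacts [hvC haC, hbA hvA]
  · refine hCne.2 (D.eq_of_subset hC hB fun v hvC => ?_)
    by_contra hvB
    rcases leaf v (mt (internal_B v) hvB) with rfl | rfl
    exacts [haC hvC, hvB hbB]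

lemma eq_or_eq_of_le_of_le (hG : G.IsTree) (hF : IsForkedPath G s)
    (hs : ∀ B ∈ D.blocks, s ∈ B) (hA : A ∈ D.blocks) (hB : B ∈ D.blocks) (hC : C ∈ D.blocks)
    (hAB : D.le A B) (hBC : D.le B C) : B = A ∨ C = B := by
  by_cases hne : A = B
  · exact Or.inl hne.symm
  rcases eq_or_eq_of_root_mem hG hF hA hB hC (hs A hA) (hs B hB) (hs C hC) hne with rfl | rfl
  · exact absurd (D.le_antisymm _ hA _ hB hAB hBC) hne
  · exact Or.inr rfl

lemma exists_maximal_of_forall_eq_or_eq {α : Type*} {S : Set α} {r : α → α → Prop}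
    (hS : S.Nonempty)
    (hr : ∀ a ∈ S, ∀ b ∈ S, ∀ c ∈ S, r a b → r b c → b = a ∨ c = b) :
    ∃ a ∈ S, ∀ b ∈ S, r a b → b = a := by
  by_contra! hnext
  obtain ⟨a, ha⟩ := hS
  obtain ⟨b, hb, hab, hba⟩ := hnext a ha
  obtain ⟨c, hc, hbc, hcb⟩ := hnext b hb
  exact (hr a ha b hb c hc hab hbc).elim hba hcb

theorem mem_Zplus_and_Zminus_iff_of_isForkedPath (hG : G.IsTree) (hF : IsForkedPath G s)
    (hfull : D.FullySupported) :
    (D.InZplus s ∧ D.InZminus s) ↔ ∀ B ∈ D.blocks, s ∈ B := by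
  constructor
  · rintro ⟨⟨M, hM, hsM, hmax⟩, m, hm, hsm, hmin⟩ C hC
    by_cases hne : m = M
    · subst hne
      exact hfull.eq_of_minimal_of_maximal hG.connected.preconnected hm hmin hmax hC ▸ hsm
    · exact root_mem_of_minimal_of_maximal hG hF hm hmin hM hmax hsm hsM hne hC
  · intro hs
    obtain ⟨B, hB, -⟩ := hfull.exists_mem_block s
    obtain ⟨M, hM, hmax⟩ := exists_maximal_of_forall_eq_or_eq (r := D.le) ⟨B, hB⟩
      fun _ hA _ hB _ hC => eq_or_eq_of_le_of_le hG hF hs hA hB hC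
    obtain ⟨m, hm, hmin⟩ := exists_maximal_of_forall_eq_or_eq (r := flip D.le) ⟨B, hB⟩
      fun _ hA _ hB _ hC hBA hCB =>
        (eq_or_eq_of_le_of_le hG hF hs hC hB hA hCB hBA).symm.imp Eq.symm Eq.symm
    exact ⟨⟨M, hM, hs M hM, hmax⟩, m, hm, hs m hm, hmin⟩

end Blocks

end StaircaseDiagram

theorem StaircaseDiagram.mem_Zplus_and_Zminus_iff_general {V : Type*} {G : SimpleGraph V}
    (hG : G.IsTree) (s : V) (hleaf : {t | G.Adj s t}.Subsingleton)
    (hchain : ∀ D : StaircaseDiagram G,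
      D.FullySupported → D.Elementary → D.InZplus s → D.IsChainDiagram)
    (D : StaircaseDiagram G) (hfull : D.FullySupported) :
    (D.InZplus s ∧ D.InZminus s) ↔ ∀ B ∈ D.blocks, s ∈ B :=
  mem_Zplus_and_Zminus_iff_of_isForkedPath hG (ZplusChains.isForkedPath hchain hG hleaf) hfull

/-- over a tree with a distinguished leaf `s`, if every fully
supported elementary staircase diagram with `s` in a maximal block is a chain,
then a fully supported elementary diagram lies in `Z⁺ ∩ Z⁻` iff every block
contains `s`. -/
theorem StaircaseDiagram.mem_Zplus_and_Zminus_iff {V : Type*} {G : SimpleGraph V}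
    (hG : G.IsTree) (s : V) (hleaf : {t | G.Adj s t}.Subsingleton)
    (hchain : ∀ D : StaircaseDiagram G,
      D.FullySupported → D.Elementary → D.InZplus s → D.IsChainDiagram)
    (D : StaircaseDiagram G) (hfull : D.FullySupported) (helem : D.Elementary) :
    (D.InZplus s ∧ D.InZminus s) ↔ ∀ B ∈ D.blocks, s ∈ B :=
  mem_Zplus_and_Zminus_iff_general hG s hleaf hchain D hfull
end

section
/- Let w = vu be a parabolic decomposition in a Coxeter group (v ∈ W^J, u ∈ W_J) and let s ∈ D_L(u) with s not in the support S(v). Then s ∈ D_L(w) if and only if s is not adjacent (in the Coxeter graph) to any element of S(v). -/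
variable {B : Type*} {W : Type*} [Group W] {M : CoxeterMatrix B}

/-- The standard parabolic subgroup `W_J`. -/
def CoxeterSystem.parabolic (cs : CoxeterSystem M W) (J : Set B) : Subgroup W :=
  Subgroup.closure (cs.simple '' J)

/-- `v` is a minimal length representative of its coset `v W_J`. -/
def CoxeterSystem.IsMinimalRep (cs : CoxeterSystem M W) (J : Set B) (v : W) :
    Prop :=
  ∀ u ∈ cs.parabolic J, cs.length v ≤ cs.length (v * u)

/-- The support `S(w)`: the smallest set of simple reflections generating a
standard parabolic subgroup containing `w`. -/
def CoxeterSystem.support (cs : CoxeterSystem M W) (w : W) : Set B :=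
  {i | ∀ J : Set B, w ∈ cs.parabolic J → i ∈ J}

/-!
Write `N(w)` for the set of right inversions of `w`, the reflections `t` with `ℓ(wt) < ℓ(w)`. The
proof rests on the cocycle identity `N(xy) = N(y) ∆ y⁻¹ N(x) y`, which replaces the exchange
condition. By its left-handed form, if `s ∉ S(v)` then `s` is a left descent of `vu` iff `v⁻¹sv` is
a left inversion of `u`. All inversions of `u` lie in `W_J`, so `v⁻¹sv ∈ W_J`; minimality of `v`
makes it simple, and `s ∉ S(v)` forces it to be `s`. Hence `s` commutes with `v`, and cancelling
right descents of `v` one at a time shows that `s` commutes with each of its letters.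

The Tits geometric representation enters only to separate parabolic subgroups: `W_J` preserves the
coordinates outside `J`, so `s ∈ W_J` forces `s ∈ J`, and, since the coordinate of `sts(α_s)` at
`α_s` is `1 - 4 cos² (π / m_{st})`, `sts ∈ W_J` with `t ∈ J` and `s ∉ J` forces `m_{st} = 2`.
-/

namespace CoxeterDescent

open CoxeterSystem

section InversionParity

variable (cs : CoxeterSystem M W)

open Classical in
/-- The action of a simple reflection on signed group elements, with signs written additively in
`ZMod 2`: conjugate the element, and flip the sign exactly at the simple reflection itself. -/
noncomputable def signedConj (i : B) : Function.End (W × ZMod 2) :=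
  fun p ↦ (cs.simple i * p.1 * cs.simple i, p.2 + if p.1 = cs.simple i then 1 else 0)

theorem inv_mul_simple_pow_mul_simple (i j : B) (n : ℕ) :
    ((cs.simple i * cs.simple j) ^ n)⁻¹ * cs.simple j =
      cs.simple j * (cs.simple i * cs.simple j) ^ n := by
  have hconj : SemiconjBy (cs.simple j) (cs.simple i * cs.simple j)
      (cs.simple i * cs.simple j)⁻¹ := by
    simp [SemiconjBy, mul_assoc]
  rw [← inv_pow, (hconj.pow_right n).eq]

theorem conj_pow_eq_simple_mul_pow_iff (i j : B) (n k : ℕ) (t : W) :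
    (cs.simple i * cs.simple j) ^ n * t * ((cs.simple i * cs.simple j) ^ n)⁻¹ =
        cs.simple j * (cs.simple i * cs.simple j) ^ k ↔
      t = cs.simple j * (cs.simple i * cs.simple j) ^ (2 * n + k) := by
  rw [mul_inv_eq_iff_eq_mul, ← eq_inv_mul_iff_mul_eq, ← mul_assoc, ← mul_assoc,
    inv_mul_simple_pow_mul_simple, mul_assoc, mul_assoc, ← pow_add, ← pow_add]
  ring_nf

open Classical in
theorem signedConj_mul_pow_apply (i j : B) (n : ℕ) (p : W × ZMod 2) :
    ((signedConj cs i * signedConj cs j) ^ n) p =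
      ((cs.simple i * cs.simple j) ^ n * p.1 * ((cs.simple i * cs.simple j) ^ n)⁻¹,
        p.2 + ∑ k ∈ Finset.range (2 * n),
          if p.1 = cs.simple j * (cs.simple i * cs.simple j) ^ k then 1 else 0) := by
  induction n with
  | zero => simp [Function.End.one_def]
  | succ n ih =>
    set c := cs.simple i * cs.simple j with hc
    rw [pow_succ']
    change signedConj cs i (signedConj cs j (((signedConj cs i * signedConj cs j) ^ n) p)) = _
    have hj : c ^ n * p.1 * (c ^ n)⁻¹ = cs.simple j ↔ p.1 = cs.simple j * c ^ (2 * n) := by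
      simpa using conj_pow_eq_simple_mul_pow_iff cs i j n 0 p.1
    have hi : cs.simple j * (c ^ n * p.1 * (c ^ n)⁻¹) * cs.simple j = cs.simple i ↔
        p.1 = cs.simple j * c ^ (2 * n + 1) := by
      rw [← conj_pow_eq_simple_mul_pow_iff cs i j n 1 p.1, pow_one, ← hc,
        ← eq_mul_inv_iff_mul_eq, inv_simple, ← eq_inv_mul_iff_mul_eq, inv_simple]
    rw [ih, mul_add_one, Finset.sum_range_succ, Finset.sum_range_succ]
    simp only [signedConj, hj, hi]
    refine Prod.ext ?_ ?_
    · simp [pow_succ', hc, mul_assoc]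
    · simp only [add_assoc]

theorem isLiftable_signedConj : M.IsLiftable (signedConj cs) := by
  classical
  intro i j
  funext p
  have hperiod (k : ℕ) : (cs.simple i * cs.simple j) ^ (M i j + k) =
      (cs.simple i * cs.simple j) ^ k := by
    rw [pow_add, simple_mul_simple_pow, one_mul]
  rw [signedConj_mul_pow_apply, two_mul, Finset.sum_range_add]
  simp [hperiod, CharTwo.add_self_eq_zero, Function.End.one_def]

/-- The action of `W` on signed group elements extending `signedConj`. -/
noncomputable def signedConjHom : W →* Function.End (W × ZMod 2) :=
  cs.lift ⟨signedConj cs, isLiftable_signedConj cs⟩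

theorem signedConjHom_simple (i : B) : signedConjHom cs (cs.simple i) = signedConj cs i :=
  cs.lift_apply_simple (isLiftable_signedConj cs) i

/-- The sign picked up by `t` under the action of `w`. It is nonzero exactly when `t` is a right
inversion of `w`, see `isRightInversion_iff_inversionParity_ne_zero`. -/
noncomputable def inversionParity (w t : W) : ZMod 2 :=
  (signedConjHom cs w (t, 0)).2

open Classical in
theorem inversionParity_simple (i : B) (t : W) :
    inversionParity cs (cs.simple i) t = if t = cs.simple i then 1 else 0 := by
  simp [inversionParity, signedConjHom_simple, signedConj]

theorem inversionParity_one (t : W) : inversionParity cs 1 t = 0 := by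
  simp [inversionParity, Function.End.one_def]

theorem signedConjHom_apply (w : W) (p : W × ZMod 2) :
    signedConjHom cs w p = (w * p.1 * w⁻¹, p.2 + inversionParity cs w p.1) := by
  classical
  induction w using cs.simple_induction_left generalizing p with
  | one => simp [inversionParity_one, Function.End.one_def]
  | mul_simple_left w i ih =>
    have hmul (q : W × ZMod 2) : signedConjHom cs (cs.simple i * w) q =
        signedConj cs i (w * q.1 * w⁻¹, q.2 + inversionParity cs w q.1) := by
      rw [map_mul, signedConjHom_simple, ← ih]
      rfl
    simp [inversionParity, hmul, signedConj, mul_assoc, add_assoc]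

theorem inversionParity_mul (x y t : W) :
    inversionParity cs (x * y) t =
      inversionParity cs y t + inversionParity cs x (y * t * y⁻¹) := by
  have h : signedConjHom cs (x * y) (t, 0) = signedConjHom cs x (signedConjHom cs y (t, 0)) := by
    rw [map_mul]
    rfl
  simpa [signedConjHom_apply] using congrArg Prod.snd h

variable {cs}

theorem inversionParity_self {t : W} (ht : cs.IsReflection t) : inversionParity cs t t = 1 := by
  obtain ⟨w, i, rfl⟩ := ht
  have hinv := inversionParity_mul cs w w⁻¹ (w * cs.simple i * w⁻¹)
  simp only [mul_inv_cancel, inversionParity_one] at hinv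
  rw [inversionParity_mul, inversionParity_mul]
  simp only [mul_assoc, inv_inv, inv_mul_cancel_left, inv_mul_cancel, mul_one, one_mul,
    inv_simple, simple_mul_simple_self, inversionParity_simple, if_true] at hinv ⊢
  linear_combination -hinv

theorem mem_rightInvSeq_of_inversionParity_ne_zero {ω : List B} {t : W}
    (h : inversionParity cs (cs.wordProd ω) t ≠ 0) : t ∈ cs.rightInvSeq ω := by
  classical
  induction ω with
  | nil => simp [inversionParity_one] at h
  | cons i ω ih =>
    rw [wordProd_cons, inversionParity_mul, inversionParity_simple] at h
    rw [rightInvSeq, List.mem_cons]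
    by_cases hhead : cs.wordProd ω * t * (cs.wordProd ω)⁻¹ = cs.simple i
    · left
      rw [← hhead]
      group
    · right
      exact ih (by simpa [hhead] using h)

theorem isRightInversion_of_inversionParity_ne_zero {w t : W}
    (h : inversionParity cs w t ≠ 0) : cs.IsRightInversion w t := by
  obtain ⟨ω, hω, rfl⟩ := cs.exists_isReduced w
  exact cs.isRightInversion_of_mem_rightInvSeq hω (mem_rightInvSeq_of_inversionParity_ne_zero h)

theorem isRightInversion_iff_inversionParity_ne_zero {w t : W} :
    cs.IsRightInversion w t ↔ inversionParity cs w t ≠ 0 := by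
  refine ⟨fun ht h ↦ ?_, isRightInversion_of_inversionParity_ne_zero⟩
  have hmul : inversionParity cs (w * t) t = 1 := by
    rw [inversionParity_mul, inversionParity_self ht.1, mul_inv_cancel_right, h, add_zero]
  exact ht.1.isRightInversion_mul_left_iff.1
    (isRightInversion_of_inversionParity_ne_zero (by rw [hmul]; exact one_ne_zero)) ht

theorem isRightInversion_mul_iff {x y t : W} :
    cs.IsRightInversion (x * y) t ↔
      Xor (cs.IsRightInversion y t) (cs.IsRightInversion x (y * t * y⁻¹)) := by
  simp only [isRightInversion_iff_inversionParity_ne_zero, inversionParity_mul]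
  generalize inversionParity cs y t = a
  generalize inversionParity cs x (y * t * y⁻¹) = b
  revert a b
  unfold Xor
  decide

theorem isLeftInversion_mul_iff {x y t : W} :
    cs.IsLeftInversion (x * y) t ↔
      Xor (cs.IsLeftInversion x t) (cs.IsLeftInversion y (x⁻¹ * t * x)) := by
  rw [← isRightInversion_inv_iff, mul_inv_rev, isRightInversion_mul_iff, inv_inv,
    isRightInversion_inv_iff, isRightInversion_inv_iff]

theorem not_isRightInversion_one (t : W) : ¬ cs.IsRightInversion 1 t := by
  simp [IsRightInversion]

theorem isRightInversion_simple_iff {i : B} {t : W} :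
    cs.IsRightInversion (cs.simple i) t ↔ t = cs.simple i := by
  classical
  simp [isRightInversion_iff_inversionParity_ne_zero, inversionParity_simple]

end InversionParity

section GeometricRepresentation

open Real Module Polynomial

theorem eval_S_mul_sin (θ : ℝ) (k : ℤ) :
    (Chebyshev.S ℝ k).eval (2 * cos (2 * θ)) * sin (2 * θ) = sin (2 * (k + 1) * θ) := by
  rw [Chebyshev.S_two_mul_real_cos]
  ring_nf

theorem eval_S_add_eval_S_mul_sin {θ : ℝ} (hθ : cos θ ≠ 0) (k : ℤ) :
    ((Chebyshev.S ℝ k).eval (2 * cos (2 * θ)) + (Chebyshev.S ℝ (k - 1)).eval (2 * cos (2 * θ))) *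
      sin θ = sin ((2 * k + 1) * θ) := by
  have hsum : sin (2 * (k + 1) * θ) + sin (2 * k * θ) = 2 * sin ((2 * k + 1) * θ) * cos θ := by
    rw [show 2 * ((k : ℝ) + 1) * θ = (2 * k + 1) * θ + θ by ring,
      show 2 * (k : ℝ) * θ = (2 * k + 1) * θ - θ by ring, sin_add, sin_sub]
    ring
  have hk := eval_S_mul_sin θ k
  have hk' := eval_S_mul_sin θ (k - 1)
  push_cast at hk'
  rw [sub_add_cancel] at hk'
  rw [sin_two_mul] at hk hk'
  apply mul_right_cancel₀ (mul_ne_zero two_ne_zero hθ)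
  linear_combination hk + hk' + hsum

/-- The polynomials on the left are the coefficients in `Module.reflection_mul_reflection_pow_apply`
as functions of the rotation angle `2 * θ`. -/
theorem eval_S_mul_eval_S_add_eval_S_mul_sin {θ : ℝ} (hθ : cos θ ≠ 0) (n : ℤ) :
    (Chebyshev.S ℝ ((n - 1) / 2)).eval (2 * cos (2 * θ)) *
        ((Chebyshev.S ℝ (n / 2)).eval (2 * cos (2 * θ)) +
          (Chebyshev.S ℝ ((n - 2) / 2)).eval (2 * cos (2 * θ))) * (sin (2 * θ) * sin θ) =
      sin (n * θ) * sin ((n + 1) * θ) := by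
  obtain ⟨k, rfl | rfl⟩ := n.even_or_odd'
  · rw [show (2 * k - 1) / 2 = k - 1 by omega, show 2 * k / 2 = k by omega,
      show (2 * k - 2) / 2 = k - 1 by omega]
    have hS := eval_S_mul_sin θ (k - 1)
    have hS' := eval_S_add_eval_S_mul_sin hθ k
    push_cast at hS ⊢
    rw [sub_add_cancel] at hS
    rw [← hS, ← hS']
    ring
  · rw [show (2 * k + 1 - 1) / 2 = k by omega, show (2 * k + 1) / 2 = k by omega,
      show (2 * k + 1 - 2) / 2 = k - 1 by omega]
    have hS := eval_S_mul_sin θ k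
    have hS' := eval_S_add_eval_S_mul_sin hθ k
    push_cast
    rw [show 2 * (k : ℝ) + 1 + 1 = 2 * (k + 1) by ring, ← hS, ← hS']
    ring

theorem reflection_mul_reflection_pow_eq_one {V : Type*} [AddCommGroup V] [Module ℝ V]
    {x y : V} {f g : Dual ℝ V} (hf : f x = 2) (hg : g y = 2) {m : ℕ} (hm : 3 ≤ m)
    (h : f y * g x = 4 * cos (π / m) ^ 2) :
    (reflection hf * reflection hg) ^ m = 1 := by
  have hm' : (3 : ℝ) ≤ m := by exact_mod_cast hm
  have hsin : 0 < sin (π / m) :=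
    sin_pos_of_pos_of_lt_pi (by positivity) (div_lt_self pi_pos (by linarith))
  have hcos : 0 < cos (π / m) :=
    cos_pos_of_mem_Ioo ⟨by linarith [pi_pos, show 0 < π / m by positivity],
      div_lt_div_of_pos_left pi_pos two_pos (by linarith)⟩
  have hsin_two : 0 < sin (2 * (π / m)) := by
    rw [sin_two_mul]
    positivity
  have hden : sin (2 * (π / m)) * sin (π / m) ≠ 0 := by positivity
  have hmπ : (m : ℝ) * (π / m) = π := mul_div_cancel₀ π (by positivity)
  have ht : 2 * cos (2 * (π / m)) = f y * g x - 2 := by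
    rw [h, cos_two_mul]
    ring
  have hcoeff := eval_S_mul_eval_S_add_eval_S_mul_sin hcos.ne' m
  have hcoeff' := eval_S_mul_eval_S_add_eval_S_mul_sin hcos.ne' (m - 1)
  push_cast at hcoeff hcoeff'
  rw [hmπ, sin_pi, zero_mul, mul_eq_zero, or_iff_left hden] at hcoeff
  rw [sub_add_cancel, hmπ, sin_pi, mul_zero, mul_eq_zero, or_iff_left hden, sub_sub, sub_sub,
    one_add_one_eq_two, show (1 : ℤ) + 2 = 3 by norm_num] at hcoeff'
  ext z
  simp [reflection_mul_reflection_pow_apply hf hg m z _ ht, hcoeff, hcoeff']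

theorem reflection_mul_reflection_pow_two_eq_one {R V : Type*} [CommRing R] [AddCommGroup V]
    [Module R V] {x y : V} {f g : Dual R V} (hf : f x = 2) (hg : g y = 2)
    (hfy : f y = 0) (hgx : g x = 0) : (reflection hf * reflection hg) ^ 2 = 1 := by
  ext z
  simp only [pow_two, LinearEquiv.mul_apply, reflection_apply, map_sub, map_smul, hf, hg, hfy, hgx,
    LinearEquiv.coe_one, id_eq]
  module

theorem cos_pi_div_natCast_eq_zero_iff {n : ℕ} : cos (π / n) = 0 ↔ n = 2 := by
  refine ⟨fun h ↦ ?_, ?_⟩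
  · obtain ⟨k, hk⟩ := cos_eq_zero_iff.1 h
    have hn : n ≠ 0 := by
      rintro rfl
      simp at h
    have hmul : (2 : ℝ) = (2 * k + 1) * n := by
      field_simp at hk
      linarith
    have hmul' : (2 : ℤ) = (2 * k + 1) * n := by exact_mod_cast hmul
    have hdvd : n ∣ 2 := Int.natCast_dvd_natCast.1 (Dvd.intro_left _ hmul'.symm)
    refine ((Nat.dvd_prime Nat.prime_two).1 hdvd).resolve_left ?_
    rintro rfl
    omega
  · rintro rfl
    exact cos_pi_div_two

variable (M) in
/-- The linear form `y ↦ 2 B(αᵢ, y)`, where `B` is the Tits bilinear form on the space of the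
geometric representation. When `M i j = 0`, which encodes `m_{ij} = ∞`, division by zero gives the
correct value `-2` at `αⱼ`. -/
noncomputable def simpleCoroot (i : B) : Dual ℝ (B →₀ ℝ) :=
  Finsupp.linearCombination ℝ fun j ↦ -2 * cos (π / M i j)

theorem simpleCoroot_single (i j : B) (a : ℝ) :
    simpleCoroot M i (Finsupp.single j a) = a * (-2 * cos (π / M i j)) := by
  simp [simpleCoroot]

theorem simpleCoroot_single_self (i : B) : simpleCoroot M i (Finsupp.single i 1) = 2 := by
  simp [simpleCoroot]

variable (M) in
/-- The reflection by which the simple reflection `i` acts in the geometric representation. -/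
noncomputable def geomReflection (i : B) : (B →₀ ℝ) ≃ₗ[ℝ] (B →₀ ℝ) :=
  reflection (simpleCoroot_single_self (M := M) i)

theorem isLiftable_geomReflection : M.IsLiftable (geomReflection M) := by
  intro i j
  have hij := simpleCoroot_single (M := M) i j 1
  have hji := simpleCoroot_single (M := M) j i 1
  rw [M.symmetric j i] at hji
  obtain h | h | h | h : M i j = 0 ∨ M i j = 1 ∨ M i j = 2 ∨ 3 ≤ M i j := by omega
  · rw [h, pow_zero]
  · obtain rfl : i = j := by
      by_contra hne
      exact M.off_diagonal i j hne h
    rw [h, pow_one]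
    exact LinearEquiv.ext fun y ↦ involutive_reflection (simpleCoroot_single_self (M := M) i) y
  · simp only [h, Nat.cast_ofNat, cos_pi_div_two, mul_zero] at hij hji
    rw [h]
    exact reflection_mul_reflection_pow_two_eq_one (simpleCoroot_single_self i)
      (simpleCoroot_single_self j) hij hji
  · refine reflection_mul_reflection_pow_eq_one (simpleCoroot_single_self i)
      (simpleCoroot_single_self j) h ?_
    rw [hij, hji]
    ring

variable (cs : CoxeterSystem M W)

/-- The Tits geometric representation of a Coxeter group. -/
noncomputable def geomRep : W →* ((B →₀ ℝ) ≃ₗ[ℝ] (B →₀ ℝ)) :=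
  cs.lift ⟨geomReflection M, isLiftable_geomReflection⟩

theorem geomRep_simple_apply (i : B) (y : B →₀ ℝ) :
    geomRep cs (cs.simple i) y = y - simpleCoroot M i y • Finsupp.single i 1 := by
  rw [geomRep, cs.lift_apply_simple isLiftable_geomReflection]
  exact reflection_apply y _

theorem geomRep_apply_apply_of_mem_parabolic {J : Set B} {w : W} (hw : w ∈ cs.parabolic J)
    {i : B} (hi : i ∉ J) (y : B →₀ ℝ) : geomRep cs w y i = y i := by
  induction hw using Subgroup.closure_induction generalizing y with
  | mem w hw =>
    obtain ⟨j, hj, rfl⟩ := hw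
    simp [geomRep_simple_apply, ne_of_mem_of_not_mem hj hi]
  | one => simp
  | mul a b _ _ ha hb => rw [map_mul, LinearEquiv.mul_apply, ha, hb]
  | inv a _ ha =>
    rw [← ha, ← LinearEquiv.mul_apply, ← map_mul, mul_inv_cancel, map_one, LinearEquiv.coe_one, id]

theorem simple_mem_parabolic_iff {J : Set B} {i : B} :
    cs.simple i ∈ cs.parabolic J ↔ i ∈ J := by
  refine ⟨fun h ↦ ?_, fun hi ↦ Subgroup.subset_closure ⟨i, hi, rfl⟩⟩
  by_contra hi
  have hfix := geomRep_apply_apply_of_mem_parabolic cs h hi (Finsupp.single i 1)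
  rw [geomRep_simple_apply, simpleCoroot_single_self] at hfix
  norm_num at hfix

theorem eq_two_of_conj_simple_mem_parabolic {J : Set B} {i j : B} (hi : i ∉ J) (hj : j ∈ J)
    (h : cs.simple i * cs.simple j * cs.simple i ∈ cs.parabolic J) : M i j = 2 := by
  have hne : i ≠ j := (ne_of_mem_of_not_mem hj hi).symm
  have hcoord : geomRep cs (cs.simple i * cs.simple j * cs.simple i) (Finsupp.single i 1) i =
      1 - 4 * cos (π / M i j) ^ 2 := by
    simp only [map_mul, LinearEquiv.mul_apply, geomRep_simple_apply, map_sub, map_smul,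
      simpleCoroot_single, M.symmetric j i, M.diagonal i, Nat.cast_one, div_one, cos_pi,
      smul_eq_mul, Finsupp.sub_apply, Finsupp.smul_apply, Finsupp.single_eq_same,
      Finsupp.single_eq_of_ne hne]
    ring
  have hfix := geomRep_apply_apply_of_mem_parabolic cs h hi (Finsupp.single i 1)
  rw [hcoord, Finsupp.single_eq_same] at hfix
  exact cos_pi_div_natCast_eq_zero_iff.1 (pow_eq_zero_iff two_ne_zero |>.1 (by linarith))

end GeometricRepresentation

section Parabolic

variable {cs : CoxeterSystem M W} {J K : Set B} {v w t : W} {a s : B}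

theorem parabolic_mono (h : J ⊆ K) : cs.parabolic J ≤ cs.parabolic K :=
  Subgroup.closure_mono (Set.image_mono h)

theorem support_subset_of_mem_parabolic (hw : w ∈ cs.parabolic J) : cs.support w ⊆ J :=
  fun _ hi ↦ hi J hw

theorem conj_mem_iff {G : Type*} [Group G] {H : Subgroup G} {g h : G} (hg : g ∈ H) :
    g * h * g⁻¹ ∈ H ↔ h ∈ H := by
  rw [H.mul_mem_cancel_right (inv_mem hg), H.mul_mem_cancel_left hg]

theorem mem_parabolic_of_isRightInversion (hw : w ∈ cs.parabolic J)
    (ht : cs.IsRightInversion w t) : t ∈ cs.parabolic J := by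
  induction hw using Subgroup.closure_induction generalizing t with
  | mem w hw =>
    obtain ⟨i, hi, rfl⟩ := hw
    rw [isRightInversion_simple_iff.1 ht]
    exact (simple_mem_parabolic_iff cs).2 hi
  | one => exact absurd ht (not_isRightInversion_one t)
  | mul x y _ hy ihx ihy =>
    obtain ⟨hyt, -⟩ | ⟨hxt, -⟩ := isRightInversion_mul_iff.1 ht
    · exact ihy hyt
    · exact (conj_mem_iff hy).1 (ihx hxt)
  | inv x hx ihx =>
    have hxt : cs.IsRightInversion x (x⁻¹ * t * x) := by
      by_contra hxt
      have hone : cs.IsRightInversion (x * x⁻¹) t :=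
        isRightInversion_mul_iff.2 (Or.inl ⟨ht, by rwa [inv_inv]⟩)
      rw [mul_inv_cancel] at hone
      exact not_isRightInversion_one t hone
    refine (conj_mem_iff (inv_mem hx)).1 ?_
    rw [inv_inv]
    exact ihx hxt

theorem mem_parabolic_of_isLeftInversion (hw : w ∈ cs.parabolic J)
    (ht : cs.IsLeftInversion w t) : t ∈ cs.parabolic J :=
  mem_parabolic_of_isRightInversion (inv_mem hw) (cs.isRightInversion_inv_iff.2 ht)

theorem mem_of_isRightDescent (hw : w ∈ cs.parabolic J) (ha : cs.IsRightDescent w a) : a ∈ J :=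
  (simple_mem_parabolic_iff cs).1 <| mem_parabolic_of_isRightInversion hw <|
    (cs.isRightInversion_simple_iff_isRightDescent w a).2 ha

theorem not_isLeftInversion_simple (hv : v ∈ cs.parabolic K) (hs : s ∉ K) :
    ¬ cs.IsLeftInversion v (cs.simple s) :=
  fun h ↦ hs ((simple_mem_parabolic_iff cs).1 (mem_parabolic_of_isLeftInversion hv h))

@[elab_as_elim]
theorem rightDescent_induction (cs : CoxeterSystem M W) {p : W → Prop} (w : W) (one : p 1)
    (mul_simple : ∀ w a, cs.IsRightDescent w a → p (w * cs.simple a) → p w) : p w := by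
  induction hn : cs.length w using Nat.strong_induction_on generalizing w with
  | h n ih =>
    subst hn
    obtain rfl | hw := eq_or_ne w 1
    · exact one
    · obtain ⟨a, ha⟩ := cs.exists_rightDescent_of_ne_one hw
      exact mul_simple w a ha (ih _ ha _ rfl)

theorem mem_parabolic_support (cs : CoxeterSystem M W) (w : W) :
    w ∈ cs.parabolic (cs.support w) := by
  induction w using rightDescent_induction cs with
  | one => exact one_mem _
  | mul_simple w a ha ih =>
    have ha_support : a ∈ cs.support w := fun J hJ ↦ mem_of_isRightDescent hJ ha
    have hsub : cs.support (w * cs.simple a) ⊆ cs.support w := fun i hi J hJ ↦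
      hi J (mul_mem hJ ((simple_mem_parabolic_iff cs).2 (ha_support J hJ)))
    exact (Subgroup.mul_mem_cancel_right _ ((simple_mem_parabolic_iff cs).2 ha_support)).1
      (parabolic_mono hsub ih)

theorem commute_simple_of_eq_two (h : M s a = 2) : Commute (cs.simple s) (cs.simple a) := by
  have hpow := cs.simple_mul_simple_pow s a
  rw [h, pow_two, mul_eq_one_iff_eq_inv, mul_inv_rev, inv_simple, inv_simple] at hpow
  exact hpow

theorem commute_simple_of_mem_parabolic (hv : v ∈ cs.parabolic {t | M s t = 2}) :
    Commute (cs.simple s) v := by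
  have hle : cs.parabolic {t | M s t = 2} ≤ Subgroup.centralizer {cs.simple s} := by
    rw [parabolic, Subgroup.closure_le]
    rintro _ ⟨t, ht, rfl⟩
    exact Subgroup.mem_centralizer_singleton_iff.2 (commute_simple_of_eq_two ht).symm.eq
  exact (Subgroup.mem_centralizer_singleton_iff.1 (hle hv)).symm

theorem eq_two_of_commute_of_isRightDescent (hv : v ∈ cs.parabolic K) (hs : s ∉ K)
    (hc : Commute (cs.simple s) v) (ha : cs.IsRightDescent v a) : M s a = 2 := by
  have haK : a ∈ K := mem_of_isRightDescent hv ha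
  have hsimple : cs.simple a ∈ cs.parabolic K := (simple_mem_parabolic_iff cs).2 haK
  rw [← isRightInversion_simple_iff_isRightDescent] at ha
  have hconj_ne : v * cs.simple a * v⁻¹ ≠ cs.simple s := by
    intro h
    have : cs.simple s ∈ cs.parabolic K := h ▸ mul_mem (mul_mem hv hsimple) (inv_mem hv)
    exact hs ((simple_mem_parabolic_iff cs).1 this)
  have hsimple_ne : cs.simple a ≠ cs.simple s := by
    intro h
    exact hs ((simple_mem_parabolic_iff cs).1 (h ▸ hsimple))
  have hvs : cs.IsRightInversion (v * cs.simple s) (cs.simple a) := by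
    rw [← hc.eq, isRightInversion_mul_iff, isRightInversion_simple_iff]
    exact Or.inl ⟨ha, hconj_ne⟩
  rw [isRightInversion_mul_iff, isRightInversion_simple_iff, inv_simple] at hvs
  obtain ⟨h, -⟩ | ⟨h, -⟩ := hvs
  · exact absurd h hsimple_ne
  · exact eq_two_of_conj_simple_mem_parabolic cs hs haK (mem_parabolic_of_isRightInversion hv h)

theorem mem_parabolic_of_commute_simple (hv : v ∈ cs.parabolic K) (hs : s ∉ K)
    (hc : Commute (cs.simple s) v) : v ∈ cs.parabolic {t | M s t = 2} := by
  induction v using rightDescent_induction cs with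
  | one => exact one_mem _
  | mul_simple v a ha ih =>
    have hsa : M s a = 2 := eq_two_of_commute_of_isRightDescent hv hs hc ha
    have hsimple : cs.simple a ∈ cs.parabolic K :=
      (simple_mem_parabolic_iff cs).2 (mem_of_isRightDescent hv ha)
    have hva := ih (mul_mem hv hsimple) (hc.mul_right (commute_simple_of_eq_two hsa))
    exact (Subgroup.mul_mem_cancel_right _ ((simple_mem_parabolic_iff cs).2 hsa)).1 hva

theorem commute_simple_iff_forall_mem_support (hs : s ∉ cs.support v) :
    Commute (cs.simple s) v ↔ ∀ t ∈ cs.support v, M s t = 2 :=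
  ⟨fun hc ↦ support_subset_of_mem_parabolic
      (mem_parabolic_of_commute_simple (mem_parabolic_support cs v) hs hc),
    fun h ↦ commute_simple_of_mem_parabolic (parabolic_mono h (mem_parabolic_support cs v))⟩

end Parabolic

section ParabolicDecomposition

variable {cs : CoxeterSystem M W} {J K : Set B} {v u t : W} {a s : B}

theorem not_isRightInversion_of_isMinimalRep (hv : cs.IsMinimalRep J v) (ht : t ∈ cs.parabolic J) :
    ¬ cs.IsRightInversion v t :=
  fun h ↦ (hv t ht).not_gt h.2

theorem exists_conj_simple_eq_simple (hv : cs.IsMinimalRep J v)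
    (hx : v⁻¹ * cs.simple s * v ∈ cs.parabolic J) : ∃ a, v⁻¹ * cs.simple s * v = cs.simple a := by
  have hne : v⁻¹ * cs.simple s * v ≠ 1 := by
    intro h
    have hs : cs.simple s = 1 := (conj_eq_one_iff (a := v⁻¹)).1 (by rwa [inv_inv])
    simpa [hs] using cs.length_simple s
  obtain ⟨a, ha⟩ := cs.exists_rightDescent_of_ne_one hne
  have haJ : cs.simple a ∈ cs.parabolic J :=
    (simple_mem_parabolic_iff cs).2 (mem_of_isRightDescent hx ha)
  have hxa := mul_mem (mul_mem hx haJ) (inv_mem hx)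
  rw [← isRightInversion_simple_iff_isRightDescent] at ha
  have hsv : cs.IsRightInversion (v * (v⁻¹ * cs.simple s * v)) (cs.simple a) :=
    isRightInversion_mul_iff.2 (Or.inl ⟨ha, not_isRightInversion_of_isMinimalRep hv hxa⟩)
  rw [mul_assoc, mul_inv_cancel_left, isRightInversion_mul_iff,
    isRightInversion_simple_iff] at hsv
  obtain ⟨h, -⟩ | ⟨h, -⟩ := hsv
  · exact absurd h (not_isRightInversion_of_isMinimalRep hv haJ)
  · refine ⟨a, ?_⟩
    rw [← h]
    group

theorem commute_of_conj_simple_eq_simple (hv : v ∈ cs.parabolic K) (hs : s ∉ K)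
    (h : v⁻¹ * cs.simple s * v = cs.simple a) : Commute (cs.simple s) v := by
  have hsv : cs.simple s * v = v * cs.simple a := by rw [← h]; group
  have hv' : v ∈ cs.parabolic (insert a K) := parabolic_mono (Set.subset_insert a K) hv
  have ha : cs.simple a ∈ cs.parabolic (insert a K) :=
    (simple_mem_parabolic_iff cs).2 (Set.mem_insert a K)
  have hmem : cs.simple s ∈ cs.parabolic (insert a K) :=
    (Subgroup.mul_mem_cancel_right _ hv').1 (hsv ▸ mul_mem hv' ha)
  obtain rfl : s = a := ((simple_mem_parabolic_iff cs).1 hmem).resolve_right hs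
  exact hsv

theorem commute_of_isLeftInversion_conj (hv : cs.IsMinimalRep J v) (hu : u ∈ cs.parabolic J)
    (hs : s ∉ cs.support v) (h : cs.IsLeftInversion u (v⁻¹ * cs.simple s * v)) :
    Commute (cs.simple s) v := by
  obtain ⟨a, ha⟩ := exists_conj_simple_eq_simple hv (mem_parabolic_of_isLeftInversion hu h)
  exact commute_of_conj_simple_eq_simple (mem_parabolic_support cs v) hs ha

theorem isLeftDescent_mul_iff_isLeftInversion_conj (hs : s ∉ cs.support v) :
    cs.IsLeftDescent (v * u) s ↔ cs.IsLeftInversion u (v⁻¹ * cs.simple s * v) := by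
  have hv : ¬ cs.IsLeftInversion v (cs.simple s) :=
    not_isLeftInversion_simple (mem_parabolic_support cs v) hs
  rw [← isLeftInversion_simple_iff_isLeftDescent, isLeftInversion_mul_iff]
  simp [hv, Xor]

end ParabolicDecomposition

end CoxeterDescent

theorem left_descent_of_parabolic_decomposition_general (cs : CoxeterSystem M W)
    (J : Set B) (v u : W) (hv : cs.IsMinimalRep J v) (hu : u ∈ cs.parabolic J)
    (s : B) (hs : s ∉ cs.support v) :
    cs.IsLeftDescent (v * u) s ↔
      cs.IsLeftDescent u s ∧ ∀ t ∈ cs.support v, M s t = 2 := by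
  rw [CoxeterDescent.isLeftDescent_mul_iff_isLeftInversion_conj hs,
    ← CoxeterDescent.commute_simple_iff_forall_mem_support hs,
    ← cs.isLeftInversion_simple_iff_isLeftDescent]
  have hconj (hc : Commute (cs.simple s) v) : v⁻¹ * cs.simple s * v = cs.simple s := by
    rw [mul_assoc, hc.eq, inv_mul_cancel_left]
  constructor
  · intro h
    have hc := CoxeterDescent.commute_of_isLeftInversion_conj hv hu hs h
    exact ⟨hconj hc ▸ h, hc⟩
  · rintro ⟨h, hc⟩
    exact (hconj hc).symm ▸ h

/-- if `w = vu` is a parabolic decomposition and `s ∈ D_L(u)` with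
`s ∉ S(v)`, then `s ∈ D_L(w)` iff `s` is not adjacent to any element of `S(v)`
(i.e. `m_{st} = 2` for all `t ∈ S(v)`). -/
theorem left_descent_of_parabolic_decomposition (cs : CoxeterSystem M W)
    (J : Set B) (v u : W) (hv : cs.IsMinimalRep J v) (hu : u ∈ cs.parabolic J)
    (s : B) (hsd : cs.IsLeftDescent u s) (hs : s ∉ cs.support v) :
    cs.IsLeftDescent (v * u) s ↔ ∀ t ∈ cs.support v, M s t = 2 :=
  (left_descent_of_parabolic_decomposition_general cs J v u hv hu s hs).trans (and_iff_right hsd)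
end

section
/- Let w ∈ W^J be a minimal coset representative and s ∈ S with s ∉ D_L(w). Write sw = vu with v ∈ W^J, u ∈ W_J. Then ℓ(v) ≥ ℓ(w), and S(v) = S(w) if s ∈ J and s commutes with every element of S(v), while S(v) = S(w) ∪ {s} otherwise. -/
variable {B : Type*} {W : Type*} [Group W] {M : CoxeterMatrix B}

/-!
The Coxeter group acts on the span of the simple roots, and an element of `W_J` changes only the
coordinates in `J`. Hence `s_i ∈ W_J` forces `i ∈ J`, and `s_i s_j s_i ∈ W_K` with `i ∉ K`, `j ∈ K`
forces `cos (π / m_{ij}) = 0`, that is `m_{ij} = 2`. The right inversions of `v w` are the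
symmetric difference of those of `w` and of the conjugates by `w⁻¹` of those of `v`.

If `u = 1` then `v = s w`, whose support is `S(w) ∪ {s}`. Otherwise `u` has a right descent `r ∈ J`.
It is an inversion of `v u = s w` but not of `w`, so `w r w⁻¹ = s`; then `w` and `v` are minimal
in the same coset, so `v = w` and `s w = w r`. If `s ∉ S(w)`, comparing the supports of both sides
gives `r = s`, so `w` commutes with `s`. Then conjugation by `s` permutes the inversions of `w`;
applied to a right descent `t` of `w` this gives `s t s ∈ W_{S(w)}`, so `s` commutes with `t`, and
one continues with `w t`.
-/

namespace CoxeterParabolic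

open CoxeterSystem

/-! ### The geometric representation -/

section Reflection

open Module Polynomial.Chebyshev

theorem cos_pi_div_natCast_eq_zero {m : ℕ} (hm : m ≠ 1) (h : Real.cos (Real.pi / m) = 0) :
    m = 2 := by
  by_contra h2
  rcases m.eq_zero_or_pos with rfl | hpos
  · simp at h
  have h3 : (3 : ℝ) ≤ m := by exact_mod_cast (by lia : 3 ≤ m)
  have hlt : Real.pi / m < Real.pi / 2 := by
    gcongr
    linarith
  have hgt : -(Real.pi / 2) < Real.pi / m :=
    (neg_neg_of_pos (by positivity)).trans (by positivity)
  exact (Real.cos_pos_of_mem_Ioo ⟨hgt, hlt⟩).ne' h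

theorem eval_S_eq_zero {θ : ℝ} (hθ : Real.sin θ ≠ 0) {n : ℤ} (hn : (n + 1) * θ = Real.pi) :
    (S ℝ n).eval (2 * Real.cos θ) = 0 := by
  refine (mul_eq_zero.mp ?_).resolve_right hθ
  rw [S_two_mul_real_cos, hn, Real.sin_pi]

theorem eval_S_add_eval_S_sub_one_eq_zero {θ : ℝ} (hθ : Real.sin θ ≠ 0) {n : ℤ}
    (hn : (2 * n + 1) * θ = 2 * Real.pi) :
    (S ℝ n).eval (2 * Real.cos θ) + (S ℝ (n - 1)).eval (2 * Real.cos θ) = 0 := by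
  refine (mul_eq_zero.mp ?_).resolve_right hθ
  rw [add_mul, S_two_mul_real_cos, S_two_mul_real_cos,
    show (n + 1) * θ = 2 * Real.pi - n * θ by linarith, Real.sin_two_pi_sub]
  push_cast
  ring_nf

variable {V : Type*} [AddCommGroup V] [Module ℝ V] {x y : V} {f g : Dual ℝ V}

theorem reflection_mul_reflection_sq_eq_one (hf : f x = 2) (hg : g y = 2) (hfy : f y = 0)
    (hgx : g x = 0) : (reflection hf * reflection hg) ^ 2 = 1 := by
  ext z
  simp only [pow_two, LinearEquiv.mul_apply, reflection_apply, map_sub, map_smul, hf, hg, hfy, hgx,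
    LinearEquiv.coe_one, id_eq]
  module

theorem reflection_mul_reflection_pow_eq_one (hf : f x = 2) (hg : g y = 2) {m : ℕ} (hm : 3 ≤ m)
    (hfg : f y * g x = 4 * Real.cos (Real.pi / m) ^ 2) :
    (reflection hf * reflection hg) ^ m = 1 := by
  set θ : ℝ := 2 * (Real.pi / m) with hθ
  have hm' : (3 : ℝ) ≤ m := by exact_mod_cast hm
  have hmθ : m * θ = 2 * Real.pi := by
    rw [hθ]
    field_simp
  have hsin : Real.sin θ ≠ 0 := by
    refine (Real.sin_pos_of_pos_of_lt_pi (by positivity) ?_).ne'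
    nlinarith [Real.pi_pos]
  have ht : f y * g x - 2 = 2 * Real.cos θ := by
    rw [hfg, hθ, Real.cos_two_mul]
    ring
  ext z
  rw [reflection_mul_reflection_pow_apply hf hg m z, ht]
  obtain ⟨k, rfl | rfl⟩ := m.even_or_odd'
  · have hk : (S ℝ (k - 1)).eval (2 * Real.cos θ) = 0 := by
      refine eval_S_eq_zero hsin ?_
      push_cast at hmθ ⊢
      linarith
    rw [show (((2 * k : ℕ) : ℤ) - 2) / 2 = k - 1 by lia,
      show (((2 * k : ℕ) : ℤ) - 1) / 2 = k - 1 by lia, hk]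
    simp
  · have hk : (S ℝ k).eval (2 * Real.cos θ) + (S ℝ (k - 1)).eval (2 * Real.cos θ) = 0 :=
      eval_S_add_eval_S_sub_one_eq_zero hsin (by exact_mod_cast hmθ)
    rw [show (((2 * k + 1 : ℕ) : ℤ) - 2) / 2 = k - 1 by lia,
      show (((2 * k + 1 : ℕ) : ℤ) - 1) / 2 = k by lia,
      show (((2 * k + 1 : ℕ) : ℤ) - 3) / 2 = k - 1 by lia,
      show ((2 * k + 1 : ℕ) : ℤ) / 2 = k by lia, hk]
    simp

end Reflection

section GeometricRepresentation

variable (M)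

/-- The simple coroot `α_i^∨`, as a linear form on the span of the simple roots
`α_j = Finsupp.single j 1`. An infinite label is encoded as `M i j = 0`, and `π / 0 = 0` gives it
the standard value `-2`. -/
noncomputable def simpleCoroot (i : B) : Module.Dual ℝ (B →₀ ℝ) :=
  Finsupp.linearCombination ℝ fun j ↦ -2 * Real.cos (Real.pi / M i j)

theorem simpleCoroot_single (i j : B) :
    simpleCoroot M i (Finsupp.single j 1) = -2 * Real.cos (Real.pi / M i j) := by
  simp [simpleCoroot]

theorem simpleCoroot_single_self (i : B) : simpleCoroot M i (Finsupp.single i 1) = 2 := by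
  simp [simpleCoroot_single]

/-- The reflection along the `i`-th simple root, by which the generator `s_i` acts in the geometric
representation. -/
noncomputable def simpleReflection (i : B) : (B →₀ ℝ) ≃ₗ[ℝ] (B →₀ ℝ) :=
  Module.reflection (simpleCoroot_single_self M i)

theorem simpleReflection_apply (i : B) (x : B →₀ ℝ) :
    simpleReflection M i x = x - simpleCoroot M i x • Finsupp.single i 1 :=
  Module.reflection_apply _ _

theorem isLiftable_simpleReflection : M.IsLiftable (simpleReflection M) := by
  intro i j
  rcases eq_or_ne i j with rfl | hij
  · rw [M.diagonal, pow_one]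
    exact LinearEquiv.ext (Module.involutive_reflection (simpleCoroot_single_self M i))
  have hi := simpleCoroot_single M i j
  have hj := simpleCoroot_single M j i
  rw [M.symmetric j i] at hj
  have h1 := M.off_diagonal i j hij
  obtain h0 | h2 | h3 : M i j = 0 ∨ M i j = 2 ∨ 3 ≤ M i j := by lia
  · rw [h0, pow_zero]
  · rw [h2] at hi hj ⊢
    exact reflection_mul_reflection_sq_eq_one _ _ (by simp [hi]) (by simp [hj])
  · refine reflection_mul_reflection_pow_eq_one _ _ h3 ?_
    rw [hi, hj]
    ring

variable {M} (cs : CoxeterSystem M W)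

/-- The geometric representation of a Coxeter group on the span of its simple roots. -/
noncomputable def geometricRep : W →* ((B →₀ ℝ) ≃ₗ[ℝ] (B →₀ ℝ)) :=
  cs.lift ⟨simpleReflection M, isLiftable_simpleReflection M⟩

theorem geometricRep_simple_apply (i : B) (x : B →₀ ℝ) :
    geometricRep cs (cs.simple i) x = x - simpleCoroot M i x • Finsupp.single i 1 := by
  rw [geometricRep, cs.lift_apply_simple, simpleReflection_apply]

theorem geometricRep_simple_single (i j : B) :
    geometricRep cs (cs.simple i) (Finsupp.single j 1) =
      Finsupp.single j 1 + (2 * Real.cos (Real.pi / M i j)) • Finsupp.single i 1 := by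
  rw [geometricRep_simple_apply, simpleCoroot_single]
  module

theorem geometricRep_simple_single_self (i : B) :
    geometricRep cs (cs.simple i) (Finsupp.single i 1) = -Finsupp.single i 1 := by
  rw [geometricRep_simple_apply, simpleCoroot_single_self]
  module

variable {cs} {J : Set B} {i : B}

theorem geometricRep_apply_of_notMem {w : W} (hw : w ∈ cs.parabolic J) (hi : i ∉ J)
    (x : B →₀ ℝ) : geometricRep cs w x i = x i := by
  induction hw using Subgroup.closure_induction generalizing x with
  | mem w hw =>
    obtain ⟨j, hj, rfl⟩ := hw
    simp [geometricRep_simple_apply, ne_of_mem_of_not_mem hj hi]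
  | one => simp
  | mul v w _ _ hv hw => rw [map_mul, LinearEquiv.mul_apply, hv, hw]
  | inv w _ hw =>
    rw [← hw, ← LinearEquiv.mul_apply, ← map_mul, mul_inv_cancel, map_one, LinearEquiv.coe_one,
      id_eq]

theorem simple_mem_parabolic (hi : i ∈ J) : cs.simple i ∈ cs.parabolic J :=
  Subgroup.subset_closure ⟨i, hi, rfl⟩

theorem simple_mem_parabolic_iff : cs.simple i ∈ cs.parabolic J ↔ i ∈ J := by
  refine ⟨fun h ↦ ?_, simple_mem_parabolic⟩
  by_contra hi
  have hfix := geometricRep_apply_of_notMem h hi (Finsupp.single i 1)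
  rw [geometricRep_simple_single_self] at hfix
  norm_num at hfix

theorem eq_two_of_simple_mul_simple_mul_simple_mem_parabolic {j : B} (hi : i ∉ J) (hj : j ∈ J)
    (h : cs.simple i * cs.simple j * cs.simple i ∈ cs.parabolic J) : M i j = 2 := by
  have hji : j ≠ i := ne_of_mem_of_not_mem hj hi
  refine cos_pi_div_natCast_eq_zero (M.off_diagonal i j hji.symm) ?_
  set c := Real.cos (Real.pi / M i j) with hc
  have himage : geometricRep cs (cs.simple i * cs.simple j * cs.simple i) (Finsupp.single i 1) =
      (1 - 4 * c ^ 2) • Finsupp.single i 1 - (2 * c) • Finsupp.single j 1 := by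
    simp only [map_mul, LinearEquiv.mul_apply, map_neg, map_add, map_smul,
      geometricRep_simple_single_self, geometricRep_simple_single, M.symmetric j i, ← hc]
    module
  have hfix := geometricRep_apply_of_notMem h hi (Finsupp.single i 1)
  rw [himage] at hfix
  simpa [hji] using hfix

theorem commute_simple_of_eq_two {j : B} (h : M i j = 2) :
    Commute (cs.simple i) (cs.simple j) := by
  have hsq := cs.simple_mul_simple_pow i j
  rw [h, pow_two] at hsq
  simpa [commute_iff_eq] using eq_inv_of_mul_eq_one_left hsq

end GeometricRepresentation

/-! ### Right inversions of a product -/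

section Inversions

variable (cs : CoxeterSystem M W)

open scoped Classical in
/-- The action of the generator `s_i` on elements of `W` with a sign in `ZMod 2`: conjugation by
`s_i`, flipping the sign of `s_i` itself. It acts on all of `W` rather than only on reflections. -/
noncomputable def signedConj (i : B) : Equiv.Perm (W × ZMod 2) :=
  Function.Involutive.toPerm
    (fun p ↦ (cs.simple i * p.1 * cs.simple i, p.2 + if p.1 = cs.simple i then 1 else 0)) <| by
    rintro ⟨t, ε⟩
    have h : cs.simple i * t * cs.simple i = cs.simple i ↔ t = cs.simple i := by
      rw [mul_eq_right, ← inv_simple, inv_mul_eq_one, inv_simple, eq_comm]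
    ext
    · simp [mul_assoc]
    · simp only [h, add_assoc, CharTwo.add_self_eq_zero, add_zero]

open scoped Classical in
theorem signedConj_apply (i : B) (t : W) (ε : ZMod 2) : signedConj cs i (t, ε) =
    (cs.simple i * t * cs.simple i, ε + if t = cs.simple i then 1 else 0) := rfl

open scoped Classical in
theorem prod_map_signedConj_apply (ω : List B) (t : W) (ε : ZMod 2) :
    (ω.map (signedConj cs)).prod (t, ε) =
      (cs.wordProd ω * t * (cs.wordProd ω)⁻¹, ε + (cs.rightInvSeq ω).count t) := by
  induction ω with
  | nil => simp [rightInvSeq]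
  | cons i ω ih =>
    have h : cs.wordProd ω * t * (cs.wordProd ω)⁻¹ = cs.simple i ↔
        (cs.wordProd ω)⁻¹ * cs.simple i * cs.wordProd ω = t := by
      rw [mul_inv_eq_iff_eq_mul, mul_assoc, inv_mul_eq_iff_eq_mul, eq_comm]
    rw [List.map_cons, List.prod_cons, Equiv.Perm.mul_apply, ih, signedConj_apply, rightInvSeq,
      List.count_cons, wordProd_cons]
    simp only [h, beq_iff_eq]
    simp [mul_assoc, add_assoc]

theorem prod_map_reverse_alternatingWord {G : Type*} [Monoid G] (f : B → G) (i j : B) (n : ℕ) :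
    ((alternatingWord i j (2 * n)).reverse.map f).prod = (f j * f i) ^ n := by
  induction n with
  | zero => simp [alternatingWord]
  | succ n ih =>
    rw [show 2 * (n + 1) = 2 * n + 1 + 1 by ring, alternatingWord_succ', alternatingWord_succ',
      List.reverse_cons, List.reverse_cons, List.map_append, List.map_append, List.prod_append,
      List.prod_append, ih]
    simp [pow_succ, mul_assoc]

theorem take_leftInvSeq_alternatingWord (i j : B) :
    (cs.leftInvSeq (alternatingWord i j (2 * M i j))).take (M i j) =
      (cs.leftInvSeq (alternatingWord i j (2 * M i j))).drop (M i j) := by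
  refine List.ext_getElem (by simp; lia) fun k hk _ ↦ ?_
  have hk' : k < M i j := by
    rw [List.length_take] at hk
    lia
  rw [List.getElem_take, List.getElem_drop, getElem_leftInvSeq_alternatingWord _ _ _ _ _ (by lia),
    getElem_leftInvSeq_alternatingWord _ _ _ _ _ (by lia), prod_alternatingWord_eq_mul_pow,
    prod_alternatingWord_eq_mul_pow, show (2 * k + 1) / 2 = k by lia,
    show (2 * (M i j + k) + 1) / 2 = M i j + k by lia, pow_add, simple_mul_simple_pow']
  simp

theorem isLiftable_signedConj : M.IsLiftable (signedConj cs) := by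
  classical
  intro i j
  refine Equiv.ext fun ⟨t, ε⟩ ↦ ?_
  have hword : cs.wordProd (alternatingWord j i (2 * M j i)).reverse = 1 :=
    (prod_map_reverse_alternatingWord cs.simple j i _).trans (cs.simple_mul_simple_pow' j i)
  rw [M.symmetric, ← prod_map_reverse_alternatingWord, prod_map_signedConj_apply, hword,
    rightInvSeq_reverse, List.count_reverse, ← List.take_append_drop (M j i) (cs.leftInvSeq _),
    take_leftInvSeq_alternatingWord, List.count_append, Nat.cast_add, CharTwo.add_self_eq_zero]
  simp

/-- The action of `W` on its signed elements in which each generator acts by `signedConj`. -/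
noncomputable def signedConjHom : W →* Equiv.Perm (W × ZMod 2) :=
  cs.lift ⟨signedConj cs, isLiftable_signedConj cs⟩

/-- The parity of the number of occurrences of `t` in the right inversion sequence of a word for
`w`. That it does not depend on the word is the reason for defining it by an action of `W`. -/
noncomputable def inversionParity (w t : W) : ZMod 2 := (signedConjHom cs w (t, 0)).2

theorem signedConjHom_wordProd (ω : List B) :
    signedConjHom cs (cs.wordProd ω) = (ω.map (signedConj cs)).prod := by
  simp [wordProd, signedConjHom, map_list_prod, Function.comp_def, cs.lift_apply_simple]

open scoped Classical in
theorem inversionParity_wordProd (ω : List B) (t : W) :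
    inversionParity cs (cs.wordProd ω) t = (cs.rightInvSeq ω).count t := by
  rw [inversionParity, signedConjHom_wordProd, prod_map_signedConj_apply, zero_add]

theorem signedConjHom_apply (w t : W) (ε : ZMod 2) :
    signedConjHom cs w (t, ε) = (w * t * w⁻¹, ε + inversionParity cs w t) := by
  classical
  obtain ⟨ω, rfl⟩ := cs.wordProd_surjective w
  rw [inversionParity_wordProd, signedConjHom_wordProd, prod_map_signedConj_apply]

theorem inversionParity_one (t : W) : inversionParity cs 1 t = 0 := by
  simp [inversionParity]

theorem inversionParity_mul (v w t : W) : inversionParity cs (v * w) t =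
    inversionParity cs w t + inversionParity cs v (w * t * w⁻¹) := by
  rw [inversionParity, map_mul, Equiv.Perm.mul_apply, signedConjHom_apply, signedConjHom_apply,
    zero_add]

theorem inversionParity_simple_self (i : B) :
    inversionParity cs (cs.simple i) (cs.simple i) = 1 := by
  classical
  simpa [rightInvSeq] using inversionParity_wordProd cs [i] (cs.simple i)

variable {cs}

theorem inversionParity_self {t : W} (ht : cs.IsReflection t) : inversionParity cs t t = 1 := by
  obtain ⟨w, i, rfl⟩ := ht
  have hcancel := inversionParity_mul cs w w⁻¹ (w * cs.simple i * w⁻¹)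
  have hconj : w⁻¹ * (w * cs.simple i * w⁻¹) * w⁻¹⁻¹ = cs.simple i := by group
  rw [mul_inv_cancel, inversionParity_one, hconj] at hcancel
  rw [inversionParity_mul, hconj, inversionParity_mul, inversionParity_simple_self,
    mul_inv_cancel_right]
  linear_combination -hcancel

theorem inversionParity_ne_zero_iff {w t : W} :
    inversionParity cs w t ≠ 0 ↔ cs.IsRightInversion w t := by
  classical
  have isRightInversion_of_ne_zero {w : W} (h : inversionParity cs w t ≠ 0) :
      cs.IsRightInversion w t := by
    obtain ⟨ω, hω, rfl⟩ := cs.exists_isReduced w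
    refine cs.isRightInversion_of_mem_rightInvSeq hω (List.count_pos_iff.mp ?_)
    rw [inversionParity_wordProd] at h
    exact Nat.pos_of_ne_zero fun h0 ↦ h (by rw [h0, Nat.cast_zero])
  refine ⟨isRightInversion_of_ne_zero, fun h h0 ↦ ?_⟩
  refine h.1.isRightInversion_mul_left_iff.mp (isRightInversion_of_ne_zero ?_) h
  rw [inversionParity_mul, inversionParity_self h.1, mul_inv_cancel_right, h0]
  decide

theorem isRightInversion_mul_iff {v w t : W} : cs.IsRightInversion (v * w) t ↔
    Xor (cs.IsRightInversion w t) (cs.IsRightInversion v (w * t * w⁻¹)) := by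
  simp only [← inversionParity_ne_zero_iff, inversionParity_mul]
  generalize inversionParity cs w t = a
  generalize inversionParity cs v (w * t * w⁻¹) = b
  decide +revert

theorem isRightInversion_simple_iff {i : B} {t : W} :
    cs.IsRightInversion (cs.simple i) t ↔ t = cs.simple i := by
  refine ⟨fun ⟨_, h⟩ ↦ ?_, ?_⟩
  · rw [length_simple, Nat.lt_one_iff, length_eq_zero_iff] at h
    rw [← inv_simple, eq_inv_of_mul_eq_one_right h]
  · rintro rfl
    simp [IsRightDescent]

theorem not_isRightInversion_one (t : W) : ¬ cs.IsRightInversion 1 t := by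
  simp [IsRightInversion]

end Inversions

/-! ### Supports -/

section Support

variable {cs : CoxeterSystem M W} {J : Set B} {i : B}

theorem mem_parabolic_of_isRightInversion {w t : W} (hw : w ∈ cs.parabolic J)
    (h : cs.IsRightInversion w t) : t ∈ cs.parabolic J := by
  induction hw using Subgroup.closure_induction generalizing t with
  | mem w hw =>
    obtain ⟨j, hj, rfl⟩ := hw
    rw [isRightInversion_simple_iff.mp h]
    exact simple_mem_parabolic hj
  | one => exact absurd h (not_isRightInversion_one t)
  | mul v w _ hwJ hv hw =>
    rcases isRightInversion_mul_iff.mp h with ⟨h, _⟩ | ⟨h, _⟩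
    · exact hw h
    · simpa [parabolic, mul_assoc] using mul_mem (mul_mem (inv_mem hwJ) (hv h)) hwJ
  | inv w hwJ hw =>
    have hconj : cs.IsRightInversion w (w⁻¹ * t * w⁻¹⁻¹) := by
      by_contra hconj
      exact not_isRightInversion_one t
        (mul_inv_cancel w ▸ isRightInversion_mul_iff.mpr (.inl ⟨h, hconj⟩))
    simpa [parabolic, mul_assoc] using mul_mem (mul_mem hwJ (hw hconj)) (inv_mem hwJ)

theorem mem_of_isRightDescent_of_mem_parabolic {w : W} (hw : w ∈ cs.parabolic J)
    (h : cs.IsRightDescent w i) : i ∈ J :=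
  simple_mem_parabolic_iff.mp <| mem_parabolic_of_isRightInversion hw <|
    (cs.isRightInversion_simple_iff_isRightDescent w i).mpr h

theorem isRightDescent_mul_simple {w : W} (h : ¬ cs.IsRightDescent w i) :
    cs.IsRightDescent (w * cs.simple i) i := by
  rwa [isRightDescent_iff_not_isRightDescent_mul, simple_mul_simple_cancel_right]

variable (cs) in
@[elab_as_elim]
theorem rightDescent_induction {p : W → Prop} (w : W) (one : p 1)
    (mul_simple : ∀ w i, ¬ cs.IsRightDescent w i → p w → p (w * cs.simple i)) : p w := by
  induction h : cs.length w using Nat.strong_induction_on generalizing w with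
  | _ n ih =>
    rcases eq_or_ne w 1 with rfl | hw
    · exact one
    obtain ⟨i, hi⟩ := cs.exists_rightDescent_of_ne_one hw
    rw [← cs.simple_mul_simple_cancel_right (w := w) i]
    exact mul_simple _ i (cs.isRightDescent_iff_not_isRightDescent_mul.mp hi)
      (ih _ (h ▸ hi) _ rfl)

theorem insert_subset_support_mul_simple {w : W} (h : ¬ cs.IsRightDescent w i) :
    insert i (cs.support w) ⊆ cs.support (w * cs.simple i) := by
  intro k hk J hJ
  have hi := mem_of_isRightDescent_of_mem_parabolic hJ (isRightDescent_mul_simple h)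
  rcases hk with rfl | hk
  · exact hi
  · refine hk J ?_
    simpa using mul_mem hJ (simple_mem_parabolic hi)

theorem parabolic_mono {K : Set B} (h : J ⊆ K) : cs.parabolic J ≤ cs.parabolic K :=
  Subgroup.closure_mono (Set.image_mono h)

variable (cs) in
theorem mem_parabolic_support (w : W) : w ∈ cs.parabolic (cs.support w) := by
  induction w using rightDescent_induction cs with
  | one => exact one_mem _
  | mul_simple w i hi ih =>
    have hsub := insert_subset_support_mul_simple hi
    exact mul_mem (parabolic_mono ((Set.subset_insert _ _).trans hsub) ih)
      (simple_mem_parabolic (hsub (Set.mem_insert _ _)))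

theorem support_mul_simple {w : W} (h : ¬ cs.IsRightDescent w i) :
    cs.support (w * cs.simple i) = insert i (cs.support w) := by
  refine Set.Subset.antisymm (fun k hk ↦ hk _ ?_) (insert_subset_support_mul_simple h)
  exact mul_mem (parabolic_mono (Set.subset_insert _ _) (mem_parabolic_support cs w))
    (simple_mem_parabolic (Set.mem_insert _ _))

variable (cs) in
theorem support_inv (w : W) : cs.support w⁻¹ = cs.support w := by
  simp only [support, inv_mem_iff]

theorem support_simple_mul {w : W} (h : ¬ cs.IsLeftDescent w i) :
    cs.support (cs.simple i * w) = insert i (cs.support w) := by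
  rw [← isRightDescent_inv_iff] at h
  rw [← support_inv, mul_inv_rev, inv_simple, support_mul_simple h, support_inv]

theorem isRightInversion_conj_simple {v t : W} (hi : i ∉ cs.support v)
    (hcomm : Commute (cs.simple i) v) (ht : cs.IsRightInversion v t) :
    cs.IsRightInversion v (cs.simple i * t * cs.simple i) := by
  have hv := mem_parabolic_support cs v
  have htv := mem_parabolic_of_isRightInversion hv ht
  have ht_ne : t ≠ cs.simple i := fun h ↦ hi (simple_mem_parabolic_iff.mp (h ▸ htv))
  have hconj_ne : v * t * v⁻¹ ≠ cs.simple i := fun h ↦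
    hi (simple_mem_parabolic_iff.mp (h ▸ mul_mem (mul_mem hv htv) (inv_mem hv)))
  have hsv : cs.IsRightInversion (cs.simple i * v) t :=
    isRightInversion_mul_iff.mpr (.inl ⟨ht, isRightInversion_simple_iff.not.mpr hconj_ne⟩)
  rw [hcomm.eq, isRightInversion_mul_iff, isRightInversion_simple_iff, inv_simple] at hsv
  exact (hsv.resolve_left fun h ↦ ht_ne h.1).1

theorem eq_two_of_isRightDescent_of_commute {v : W} {j : B} (hi : i ∉ cs.support v)
    (hcomm : Commute (cs.simple i) v) (hj : cs.IsRightDescent v j) : M i j = 2 := by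
  have hv := mem_parabolic_support cs v
  refine eq_two_of_simple_mul_simple_mul_simple_mem_parabolic hi
    (mem_of_isRightDescent_of_mem_parabolic hv hj) (mem_parabolic_of_isRightInversion hv ?_)
  exact isRightInversion_conj_simple hi hcomm
    ((cs.isRightInversion_simple_iff_isRightDescent v j).mpr hj)

theorem eq_two_of_mem_support_of_commute {v : W} {j : B} (hi : i ∉ cs.support v)
    (hcomm : Commute (cs.simple i) v) (hj : j ∈ cs.support v) : M i j = 2 := by
  induction v using rightDescent_induction cs with
  | one => exact absurd (hj ∅ (one_mem _)) (Set.notMem_empty j)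
  | mul_simple w k hk ih =>
    have hik := eq_two_of_isRightDescent_of_commute hi hcomm (isRightDescent_mul_simple hk)
    rw [support_mul_simple hk] at hi hj
    rcases hj with rfl | hj
    · exact hik
    · refine ih (fun h ↦ hi (.inr h)) ?_ hj
      simpa using hcomm.mul_right (commute_simple_of_eq_two hik)

end Support

/-! ### Minimal coset representatives -/

section MinimalRep

variable {cs : CoxeterSystem M W} {J : Set B}

theorem not_isRightInversion_of_isMinimalRep {v t : W} (hv : cs.IsMinimalRep J v)
    (ht : t ∈ cs.parabolic J) : ¬ cs.IsRightInversion v t :=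
  fun h ↦ (hv t ht).not_gt h.2

theorem exists_isRightInversion_mul {v u : W} (hv : cs.IsMinimalRep J v)
    (hu : u ∈ cs.parabolic J) (hu1 : u ≠ 1) :
    ∃ r ∈ J, cs.IsRightInversion (v * u) (cs.simple r) := by
  obtain ⟨r, hr⟩ := cs.exists_rightDescent_of_ne_one hu1
  have hrJ := mem_of_isRightDescent_of_mem_parabolic hu hr
  have hconj := mul_mem (mul_mem hu (simple_mem_parabolic hrJ)) (inv_mem hu)
  exact ⟨r, hrJ, isRightInversion_mul_iff.mpr <| .inl
    ⟨(cs.isRightInversion_simple_iff_isRightDescent u r).mpr hr,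
      not_isRightInversion_of_isMinimalRep hv hconj⟩⟩

theorem eq_one_of_isMinimalRep_mul {v u : W} (hv : cs.IsMinimalRep J v) (hu : u ∈ cs.parabolic J)
    (hvu : cs.IsMinimalRep J (v * u)) : u = 1 := by
  by_contra hu1
  obtain ⟨r, hr, hinv⟩ := exists_isRightInversion_mul hv hu hu1
  exact not_isRightInversion_of_isMinimalRep hvu (simple_mem_parabolic hr) hinv

/-- Deodhar's lemma. -/
theorem eq_simple_mul_or_exists_simple_mul_eq_mul_simple {v w u : W} {s : B}
    (hw : cs.IsMinimalRep J w) (hv : cs.IsMinimalRep J v) (hu : u ∈ cs.parabolic J)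
    (heq : cs.simple s * w = v * u) :
    v = cs.simple s * w ∨ v = w ∧ ∃ r ∈ J, cs.simple s * w = w * cs.simple r := by
  rcases eq_or_ne u 1 with rfl | hu1
  · exact .inl (by simpa using heq.symm)
  obtain ⟨r, hr, hinv⟩ := exists_isRightInversion_mul hv hu hu1
  have hrJ := simple_mem_parabolic (cs := cs) hr
  have hsw : cs.simple s * w = w * cs.simple r := by
    rw [← heq, isRightInversion_mul_iff, isRightInversion_simple_iff] at hinv
    have hconj := (hinv.resolve_left fun h ↦ not_isRightInversion_of_isMinimalRep hw hrJ h.1).1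
    exact (mul_inv_eq_iff_eq_mul.mp hconj).symm
  have hwv : w = v * (u * cs.simple r) := by
    rw [← mul_assoc, ← heq, hsw, simple_mul_simple_cancel_right]
  have hone := eq_one_of_isMinimalRep_mul hv (mul_mem hu hrJ) (hwv ▸ hw)
  exact .inr ⟨by rw [hwv, hone, mul_one], r, hr, hsw⟩

theorem mem_and_eq_two_of_simple_mul_eq_mul_simple {w : W} {r s : B} (hw : cs.IsMinimalRep J w)
    (hs : ¬ cs.IsLeftDescent w s) (hr : r ∈ J) (hsw : cs.simple s * w = w * cs.simple r)
    (hsupp : s ∉ cs.support w) : s ∈ J ∧ ∀ t ∈ cs.support w, M s t = 2 := by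
  have hr' : ¬ cs.IsRightDescent w r := (hw _ (simple_mem_parabolic hr)).not_gt
  have hmem : s ∈ insert r (cs.support w) := by
    rw [← support_mul_simple hr', ← hsw, support_simple_mul hs]
    exact Set.mem_insert _ _
  obtain rfl : s = r := hmem.resolve_right hsupp
  exact ⟨hr, fun t ht ↦ eq_two_of_mem_support_of_commute hsupp hsw ht⟩

end MinimalRep

end CoxeterParabolic

open CoxeterParabolic in
/-- let `w ∈ W^J`, `s ∉ D_L(w)`, and write `sw = vu` with
`v ∈ W^J`, `u ∈ W_J`. Then `ℓ(v) ≥ ℓ(w)`; moreover `S(v) = S(w)` if `s ∈ J` and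
`s` commutes with every element of `S(v)`, and `S(v) = S(w) ∪ {s}` otherwise. -/
theorem support_of_parabolic_factor (cs : CoxeterSystem M W) (J : Set B)
    (w : W) (hw : cs.IsMinimalRep J w) (s : B) (hs : ¬ cs.IsLeftDescent w s)
    (v u : W) (hv : cs.IsMinimalRep J v) (hu : u ∈ cs.parabolic J)
    (heq : cs.simple s * w = v * u) :
    cs.length w ≤ cs.length v ∧
    ((s ∈ J ∧ ∀ t ∈ cs.support v, M s t = 2) →
      cs.support v = cs.support w) ∧
    (¬ (s ∈ J ∧ ∀ t ∈ cs.support v, M s t = 2) →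
      cs.support v = cs.support w ∪ {s}) := by
  rcases eq_simple_mul_or_exists_simple_mul_eq_mul_simple hw hv hu heq with
    rfl | ⟨rfl, r, hr, hsw⟩
  · have hsupp : cs.support (cs.simple s * w) = cs.support w ∪ {s} := by
      rw [support_simple_mul hs, Set.union_singleton]
    refine ⟨(cs.not_isLeftDescent_iff.mp hs).symm ▸ Nat.le_succ _, fun h ↦ ?_, fun _ ↦ hsupp⟩
    simpa using h.2 s (hsupp ▸ .inr rfl)
  · refine ⟨le_rfl, fun _ ↦ rfl, fun h ↦ ?_⟩
    have hmem : s ∈ cs.support v := by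
      by_contra hs'
      exact h (mem_and_eq_two_of_simple_mul_eq_mul_simple hw hs hr hsw hs')
    rw [Set.union_singleton, Set.insert_eq_of_mem hmem]
end
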